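/- arXiv:2004.11025 — 4 statements merged into one kernel-verified Lean document; each statement's English description precedes it below -/
import Mathlib

section
/- Let X and Y be Banach spaces over 𝕂 (= ℝ or ℂ). Then the set of compact bounded linear operators from X to Y which uniquely quasi attain their norm is dense, in the operator norm, in the space K(X,Y) of all compact operators from X to Y. -/
open Filter

variable {𝕜 X Y : Type*} [RCLike 𝕜]
  [NormedAddCommGroup X] [NormedSpace 𝕜 X]
  [NormedAddCommGroup Y] [NormedSpace 𝕜 Y]

/-- `T` uniquely quasi attains its norm: there is `u ∈ Y` such that every sequence `(x_n)` in the
closed unit ball with `‖T x_n‖ → ‖T‖` has a subsequence `(x_{σ(n)})` and a unimodular scalar `θ`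
with `T x_{σ(n)} → θ • u`. -/
def UniquelyQuasiAttainsNorm (T : X →L[𝕜] Y) : Prop :=
  ∃ u : Y, ∀ x : ℕ → X, (∀ n, x n ∈ Metric.closedBall (0 : X) 1) →
    Tendsto (fun n => ‖T (x n)‖) atTop (nhds ‖T‖) →
    ∃ σ : ℕ → ℕ, StrictMono σ ∧ ∃ θ : 𝕜, ‖θ‖ = 1 ∧
      Tendsto (fun n => T (x (σ n))) atTop (nhds (θ • u))

open Topology

/-- The points of `K` at which `φ + re f` attains its maximum over `K`. -/
def perturbedMaximizers (K : Set Y) (φ : Y → ℝ) (f : StrongDual 𝕜 Y) : Set Y :=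
  {y | y ∈ K ∧ ∀ w ∈ K, φ w + RCLike.re (f w) ≤ φ y + RCLike.re (f y)}

theorem perturbedMaximizers_nonempty {K : Set Y} (hK : IsCompact K) (hne : K.Nonempty)
    {φ : Y → ℝ} (hφ : Continuous φ) (f : StrongDual 𝕜 Y) :
    (perturbedMaximizers K φ f).Nonempty := by
  have hc : Continuous fun y => φ y + RCLike.re (f y) := by fun_prop
  obtain ⟨y, hy, hmax⟩ := hK.exists_isMaxOn hne hc.continuousOn
  exact ⟨y, hy, fun w hw => hmax hw⟩

/-- Along the line `f + t g`, the values of `re g` at maximizers increase with `t`. -/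
theorem re_le_re_of_mem_perturbedMaximizers {K : Set Y} {φ : Y → ℝ} {f g : StrongDual 𝕜 Y}
    {s t : ℝ} (hst : s < t) {y z : Y} (hy : y ∈ perturbedMaximizers K φ (f + (s : 𝕜) • g))
    (hz : z ∈ perturbedMaximizers K φ (f + (t : 𝕜) • g)) :
    RCLike.re (g y) ≤ RCLike.re (g z) := by
  have h₁ := hy.2 z hz.1
  have h₂ := hz.2 y hy.1
  simp only [add_apply, smul_apply, smul_eq_mul, map_add, RCLike.re_ofReal_mul] at h₁ h₂
  nlinarith

/-- For all but countably many `t`, `re g` is constant on the maximizers for `f + t g`. -/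
theorem countable_not_re_eq_on_perturbedMaximizers {K : Set Y} (hK : IsCompact K)
    (hne : K.Nonempty) {φ : Y → ℝ} (hφ : Continuous φ) (f g : StrongDual 𝕜 Y) :
    {t : ℝ | ¬ ∀ y ∈ perturbedMaximizers K φ (f + (t : 𝕜) • g),
      ∀ z ∈ perturbedMaximizers K φ (f + (t : 𝕜) • g),
        RCLike.re (g y) = RCLike.re (g z)}.Countable := by
  choose m hm using fun t : ℝ => perturbedMaximizers_nonempty hK hne hφ (f + (t : 𝕜) • g)
  have hmono : Monotone fun t => RCLike.re (g (m t)) := by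
    intro s t hst
    rcases hst.eq_or_lt with rfl | hst
    · exact le_rfl
    · exact re_le_re_of_mem_perturbedMaximizers hst (hm s) (hm t)
  refine hmono.countable_not_continuousAt.mono ?_
  intro t ht hcont
  refine ht ?_
  have key : ∀ y ∈ perturbedMaximizers K φ (f + (t : 𝕜) • g),
      RCLike.re (g y) = RCLike.re (g (m t)) := by
    intro y hy
    apply le_antisymm
    · refine ge_of_tendsto (hcont.tendsto.mono_left (nhdsWithin_le_nhds (s := Set.Ioi t))) ?_
      filter_upwards [self_mem_nhdsWithin] with s hs
      exact re_le_re_of_mem_perturbedMaximizers hs hy (hm s)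
    · refine le_of_tendsto (hcont.tendsto.mono_left (nhdsWithin_le_nhds (s := Set.Iio t))) ?_
      filter_upwards [self_mem_nhdsWithin] with s hs
      exact re_le_re_of_mem_perturbedMaximizers hs (hm s) hy
  intro y hy z hz
  rw [key y hy, key z hz]

theorem isOpen_setOf_perturbedMaximizers_re_sub_lt {K : Set Y} (hK : IsCompact K)
    {φ : Y → ℝ} (hφ : Continuous φ) (g : StrongDual 𝕜 Y) (r : ℝ) :
    IsOpen {f : StrongDual 𝕜 Y | ∀ y ∈ perturbedMaximizers K φ f,
      ∀ z ∈ perturbedMaximizers K φ f, RCLike.re (g y) - RCLike.re (g z) < r} := by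
  have : CompactSpace K := isCompact_iff_compactSpace.mp hK
  let C : Set (StrongDual 𝕜 Y × (K × K)) :=
    {p | (∀ w ∈ K, φ w + RCLike.re (p.1 w) ≤ φ p.2.1 + RCLike.re (p.1 p.2.1)) ∧
      (∀ w ∈ K, φ w + RCLike.re (p.1 w) ≤ φ p.2.2 + RCLike.re (p.1 p.2.2)) ∧
      r ≤ RCLike.re (g p.2.1) - RCLike.re (g p.2.2)}
  have hC : IsClosed C := by
    simp only [C, Set.ofPred_and, Set.ofPred_forall]
    refine .inter ?_ (.inter ?_ ?_)
    · exact isClosed_iInter fun w => isClosed_iInter fun _ =>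
        isClosed_le (by fun_prop) (by fun_prop)
    · exact isClosed_iInter fun w => isClosed_iInter fun _ =>
        isClosed_le (by fun_prop) (by fun_prop)
    · exact isClosed_le (by fun_prop) (by fun_prop)
  have himage := isClosedMap_fst_of_compactSpace C hC
  rw [← isOpen_compl_iff] at himage
  convert himage using 1
  ext f
  simp only [Set.mem_ofPred_eq, Set.mem_compl_iff, Set.mem_image, not_exists, not_and]
  constructor
  · rintro h ⟨f', y, z⟩ ⟨h₁, h₂, h₃⟩ rfl
    exact absurd (h y ⟨y.2, h₁⟩ z ⟨z.2, h₂⟩) (not_lt.mpr h₃)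
  · intro h y hy z hz
    by_contra! hr
    exact h (f, ⟨y, hy.1⟩, ⟨z, hz.1⟩) ⟨hy.2, hz.2, hr⟩ rfl

theorem dense_setOf_perturbedMaximizers_re_sub_lt {K : Set Y} (hK : IsCompact K)
    (hne : K.Nonempty) {φ : Y → ℝ} (hφ : Continuous φ) (g : StrongDual 𝕜 Y) {r : ℝ}
    (hr : 0 < r) :
    Dense {f : StrongDual 𝕜 Y | ∀ y ∈ perturbedMaximizers K φ f,
      ∀ z ∈ perturbedMaximizers K φ f, RCLike.re (g y) - RCLike.re (g z) < r} := by
  intro f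
  have hd := (countable_not_re_eq_on_perturbedMaximizers hK hne hφ f g).dense_compl ℝ
  have hc : Continuous fun t : ℝ => f + (t : 𝕜) • g := by fun_prop
  have h0 := map_mem_closure hc (hd 0) (t := {f : StrongDual 𝕜 Y |
    ∀ y ∈ perturbedMaximizers K φ f, ∀ z ∈ perturbedMaximizers K φ f,
      RCLike.re (g y) - RCLike.re (g z) < r}) ?_
  · have hf : f + ((0 : ℝ) : 𝕜) • g = f := by
      ext y
      simp
    rwa [hf] at h0
  · intro t ht y hy z hz
    rw [not_not.mp ht y hy z hz, sub_self]
    exact hr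

/-- Countably many functionals separate the points of a compact set. -/
theorem IsCompact.exists_seq_strongDual_separating (𝕜 : Type*) [RCLike 𝕜] [NormedSpace 𝕜 Y]
    {K : Set Y} (hK : IsCompact K) :
    ∃ g : ℕ → StrongDual 𝕜 Y, ∀ y ∈ K, ∀ z ∈ K,
      (∀ n, RCLike.re (g n y) = RCLike.re (g n z)) → y = z := by
  rcases K.eq_empty_or_nonempty with rfl | hne
  · exact ⟨0, by simp⟩
  have hsep : TopologicalSpace.IsSeparable ((fun p : Y × Y => p.1 - p.2) '' K ×ˢ K) :=
    ((hK.prod hK).image (by fun_prop)).isSeparable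
  obtain ⟨c, hc, hcl⟩ := hsep
  have hcne : c.Nonempty := by
    rw [← closure_nonempty_iff]
    exact ((hne.prod hne).image _).mono hcl
  obtain ⟨d, rfl⟩ := hc.exists_eq_range hcne
  choose g hg₁ hg₂ using fun n => exists_dual_vector'' 𝕜 (d n)
  refine ⟨g, fun y hy z hz h => ?_⟩
  by_contra hyz
  have hpos : 0 < ‖y - z‖ := norm_pos_iff.mpr (sub_ne_zero.mpr hyz)
  obtain ⟨_, ⟨n, rfl⟩, hn⟩ := Metric.mem_closure_iff.mp (hcl ⟨(y, z), ⟨hy, hz⟩, rfl⟩) _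
    (half_pos hpos)
  rw [dist_eq_norm] at hn
  have h₁ : RCLike.re (g n (y - z)) = 0 := by simp [h n]
  have h₂ : RCLike.re (g n (d n)) = ‖d n‖ := by rw [hg₂]; exact RCLike.ofReal_re _
  have h₃ : |RCLike.re (g n (y - z - d n))| ≤ ‖y - z - d n‖ :=
    (RCLike.abs_re_le_norm _).trans ((g n).le_of_opNorm_le (hg₁ n) _ |>.trans_eq (one_mul _))
  rw [map_sub, map_sub, h₁, h₂, zero_sub, abs_neg, abs_norm] at h₃
  have h₄ := norm_sub_norm_le (y - z) (d n)
  simp only at hn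
  linarith

/-- A continuous function on a nonempty compact set has arbitrarily small linear perturbations
with exactly one maximizer. -/
theorem exists_small_perturbation_unique_maximizer (𝕜 : Type*) [RCLike 𝕜] [NormedSpace 𝕜 Y]
    {K : Set Y} (hK : IsCompact K) (hne : K.Nonempty) {φ : Y → ℝ} (hφ : Continuous φ)
    {δ : ℝ} (hδ : 0 < δ) :
    ∃ f : StrongDual 𝕜 Y, ‖f‖ < δ ∧ ∃ y, perturbedMaximizers K φ f = {y} := by
  obtain ⟨g, hg⟩ := hK.exists_seq_strongDual_separating 𝕜
  have hdense := dense_iInter_of_isOpen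
    (fun p : ℕ × ℕ => isOpen_setOf_perturbedMaximizers_re_sub_lt hK hφ (g p.1) (1 / (p.2 + 1 : ℝ)))
    (fun p => dense_setOf_perturbedMaximizers_re_sub_lt hK hne hφ (g p.1) Nat.one_div_pos_of_nat)
  obtain ⟨f, hf, hfδ⟩ := hdense.exists_dist_lt 0 hδ
  refine ⟨f, by simpa using hfδ, ?_⟩
  obtain ⟨y, hy⟩ := perturbedMaximizers_nonempty hK hne hφ f
  simp only [Set.mem_iInter, Set.mem_ofPred_eq, Prod.forall] at hf
  have hle : ∀ n, ∀ a ∈ perturbedMaximizers K φ f, ∀ b ∈ perturbedMaximizers K φ f,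
      RCLike.re (g n a) ≤ RCLike.re (g n b) := by
    intro n a ha b hb
    by_contra! hlt
    obtain ⟨k, hk⟩ := exists_nat_one_div_lt (sub_pos.mpr hlt)
    exact lt_asymm hk (hf n k a ha b hb)
  refine ⟨y, Set.eq_singleton_iff_unique_mem.mpr ⟨hy, fun z hz => ?_⟩⟩
  exact hg z hz.1 y hy.1 fun n => le_antisymm (hle n z hz y hy) (hle n y hy z hz)

/-- A nonempty compact balanced set has a point which, up to unimodular scalars, is the only
maximizer of `‖y‖ + ‖f y‖`, for some functional `f` of arbitrarily small norm. -/
theorem exists_small_strongDual_unique_maximizer_norm_add (𝕜 : Type*) [RCLike 𝕜] [NormedSpace 𝕜 Y]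
    {K : Set Y} (hK : IsCompact K) (hne : K.Nonempty) (hbal : Balanced 𝕜 K)
    {δ : ℝ} (hδ : 0 < δ) :
    ∃ f : StrongDual 𝕜 Y, ‖f‖ < δ ∧ ∃ u ∈ K, f u = (‖f u‖ : 𝕜) ∧
      (∀ y ∈ K, ‖y‖ + ‖f y‖ ≤ ‖u‖ + ‖f u‖) ∧
      ∀ y ∈ K, ‖u‖ + ‖f u‖ ≤ ‖y‖ + ‖f y‖ → ∃ θ : 𝕜, ‖θ‖ = 1 ∧ y = θ • u := by
  obtain ⟨f, hf, u, hu⟩ :=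
    exists_small_perturbation_unique_maximizer 𝕜 hK hne (continuous_norm (E := Y)) hδ
  have hmem : u ∈ perturbedMaximizers K norm f := hu ▸ rfl
  have hrot : ∀ y : Y, ∃ c : 𝕜, ‖c‖ = 1 ∧ f (c • y) = (‖f y‖ : 𝕜) := by
    intro y
    obtain ⟨c, hc, h⟩ := RCLike.exists_norm_eq_mul_self (f y)
    exact ⟨c, hc, by rw [map_smul, smul_eq_mul, ← h]⟩
  have hmax : ∀ y ∈ K, ‖y‖ + ‖f y‖ ≤ ‖u‖ + RCLike.re (f u) := by
    intro y hy
    obtain ⟨c, hc, h⟩ := hrot y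
    have := hmem.2 (c • y) (hbal.smul_mem hc.le hy)
    rwa [h, RCLike.ofReal_re, norm_smul, hc, one_mul] at this
  have hre : RCLike.re (f u) = ‖f u‖ :=
    le_antisymm (RCLike.re_le_norm _) (by linarith [hmax u hmem.1])
  refine ⟨f, hf, u, hmem.1, RCLike.norm_le_re_iff_eq_norm.mp hre.ge, fun y hy => hre ▸ hmax y hy, ?_⟩
  intro y hy hle
  obtain ⟨c, hc, h⟩ := hrot y
  have hcy : c • y ∈ perturbedMaximizers K norm f := by
    refine ⟨hbal.smul_mem hc.le hy, fun w hw => (hmem.2 w hw).trans ?_⟩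
    rwa [h, RCLike.ofReal_re, norm_smul, hc, one_mul, hre]
  rw [hu, Set.mem_singleton_iff] at hcy
  have hc0 : c ≠ 0 := norm_ne_zero_iff.mp (by simp [hc])
  exact ⟨c⁻¹, by simp [hc], by rw [← hcy, inv_smul_smul₀ hc0]⟩

/-- compact operators which uniquely quasi attain their norm are dense (in operator
norm) in the space of compact operators. -/
theorem compact_uniquely_quasi_attaining_dense
    {𝕜 X Y : Type*} [RCLike 𝕜]
    [NormedAddCommGroup X] [NormedSpace 𝕜 X] [CompleteSpace X]
    [NormedAddCommGroup Y] [NormedSpace 𝕜 Y] [CompleteSpace Y]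
    (T : X →L[𝕜] Y) (hT : IsCompact (closure (⇑T '' Metric.closedBall 0 1)))
    (ε : ℝ) (hε : 0 < ε) :
    ∃ S : X →L[𝕜] Y, IsCompact (closure (⇑S '' Metric.closedBall 0 1)) ∧
      UniquelyQuasiAttainsNorm S ∧ ‖S - T‖ < ε := by
  set K := closure (⇑T '' Metric.closedBall 0 1)
  have hTK : ∀ x ∈ Metric.closedBall (0 : X) 1, T x ∈ K := fun x hx =>
    subset_closure ⟨x, hx, rfl⟩
  have hne : K.Nonempty := ⟨T 0, hTK 0 (by simp)⟩
  have hbal : Balanced 𝕜 K := by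
    refine Balanced.closure fun a ha => ?_
    rintro _ ⟨_, ⟨x, hx, rfl⟩, rfl⟩
    exact ⟨a • x, balanced_closedBall_zero.smul_mem ha hx, map_smul T a x⟩
  obtain ⟨f, hf, u, huK, hfu, hmax, huniq⟩ :=
    exists_small_strongDual_unique_maximizer_norm_add 𝕜 hT hne hbal
      (δ := ε / (‖T‖ + 1)) (by positivity)
  let z : Y := ((‖u‖⁻¹ : ℝ) : 𝕜) • u
  have hz : ‖z‖ ≤ 1 := by
    simp only [z, norm_smul, RCLike.norm_ofReal, abs_inv, abs_norm]
    exact inv_mul_le_one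
  let A : Y →L[𝕜] Y := ContinuousLinearMap.id 𝕜 Y + f.smulRight z
  have hA : ∀ y, A y = y + f y • z := fun y => by simp [A]
  have hAle : ∀ y, ‖A y‖ ≤ ‖y‖ + ‖f y‖ := by
    intro y
    rw [hA]
    refine (norm_add_le _ _).trans ?_
    rw [norm_smul]
    gcongr
    exact mul_le_of_le_one_right (norm_nonneg _) hz
  have hAu : ‖A u‖ = ‖u‖ + ‖f u‖ := by
    by_cases hu : u = 0
    · simp [hu]
    have hu' : ‖u‖ ≠ 0 := norm_ne_zero_iff.mpr hu
    have : A u = ((1 + ‖f u‖ * ‖u‖⁻¹ : ℝ) : 𝕜) • u := by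
      rw [hA, hfu]
      simp only [z, smul_smul, RCLike.norm_ofReal, abs_norm]
      push_cast
      rw [add_smul, one_smul]
    rw [this, norm_smul, RCLike.norm_ofReal, abs_of_nonneg (by positivity)]
    field_simp
  have hnorm : ‖A ∘L T‖ = ‖A u‖ := by
    apply le_antisymm
    · refine ContinuousLinearMap.opNorm_le_of_unit_norm (norm_nonneg _) fun x hx => ?_
      rw [hAu]
      exact (hAle _).trans (hmax _ (hTK x (by simp [hx])))
    · have hclosed : IsClosed {y | ‖A y‖ ≤ ‖A ∘L T‖} :=
        isClosed_le (by fun_prop) continuous_const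
      refine closure_minimal ?_ hclosed huK
      rintro _ ⟨x, hx, rfl⟩
      exact (A ∘L T).unit_le_opNorm x (by simpa using hx)
  refine ⟨A ∘L T, ?_, ⟨A u, fun x hx hlim => ?_⟩, ?_⟩
  · refine (hT.image A.continuous).closure_of_subset ?_
    rintro _ ⟨x, hx, rfl⟩
    exact ⟨T x, hTK x hx, rfl⟩
  · obtain ⟨y, hy, σ, hσ, hσy⟩ := hT.tendsto_subseq fun n => hTK (x n) (hx n)
    have hAy : Tendsto (fun n => (A ∘L T) (x (σ n))) atTop (𝓝 (A y)) :=
      (A.continuous.tendsto y).comp hσy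
    have heq : ‖A y‖ = ‖A u‖ :=
      hnorm ▸ tendsto_nhds_unique hAy.norm (hlim.comp hσ.tendsto_atTop)
    obtain ⟨θ, hθ, rfl⟩ := huniq y hy (by rw [← hAu, ← heq]; exact hAle y)
    exact ⟨σ, hσ, θ, hθ, by rwa [map_smul] at hAy⟩
  · have hsub : A ∘L T - T = (f ∘L T).smulRight z := by
      ext x
      simp [hA]
    rw [hsub, ContinuousLinearMap.norm_smulRight_apply]
    calc ‖f ∘L T‖ * ‖z‖ ≤ ‖f‖ * ‖T‖ :=
          (mul_le_of_le_one_right (norm_nonneg _) hz).trans (f.opNorm_comp_le T)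
      _ ≤ ‖f‖ * (‖T‖ + 1) := by gcongr; linarith
      _ < ε := (lt_div_iff₀ (by positivity)).mp hf
end

section
/- Let X and Y be Banach spaces over 𝕂 (= ℝ or ℂ). Then the set of weakly compact bounded linear operators from X to Y which uniquely quasi attain their norm is dense, in the operator norm, in the space W(X,Y) of all weakly compact operators from X to Y. -/
open Filter

variable {𝕜 X Y : Type*} [RCLike 𝕜]
  [NormedAddCommGroup X] [NormedSpace 𝕜 X]
  [NormedAddCommGroup Y] [NormedSpace 𝕜 Y]

/-- `T` is weakly compact: the norm closure of `T '' B_X` is compact in the weak topology. -/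
def IsWeaklyCompactOperator (T : X →L[𝕜] Y) : Prop :=
  IsCompact (⇑(toWeakSpace 𝕜 Y) '' closure (⇑T '' Metric.closedBall 0 1))

open TopologicalSpace

/-- Ultrafilter limits in a weakly compact set, tested against continuous functionals. -/
theorem exists_weak_limit_of_ultrafilter {K : Set Y} (hK : IsCompact (toWeakSpace 𝕜 Y '' K))
    {α : Type*} (U : Ultrafilter α) {y : α → Y} (hy : ∀ᶠ a in U, y a ∈ K) :
    ∃ y₀ ∈ K, ∀ g : StrongDual 𝕜 Y, Tendsto (fun a => g (y a)) U (nhds (g y₀)) := by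
  obtain ⟨_, ⟨y₀, hy₀, rfl⟩, hlim⟩ := hK.ultrafilter_le_nhds
    (U.map fun a => toWeakSpace 𝕜 Y (y a)) (by
      rw [le_principal_iff]
      exact hy.mono fun a ha => ⟨_, ha, rfl⟩)
  refine ⟨y₀, hy₀, fun g => ?_⟩
  have hg : Continuous fun w : WeakSpace 𝕜 Y => (topDualPairing 𝕜 Y).flip w g :=
    WeakBilin.eval_continuous _ g
  exact (hg.tendsto (toWeakSpace 𝕜 Y y₀)).comp hlim

/-- A weakly compact set of functionals on a separable space is norm separable. -/
theorem isSeparable_flip_image_of_isCompact_weak {Z : Type*} [NormedAddCommGroup Z]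
    [NormedSpace 𝕜 Z] [SeparableSpace Z] (B : Z →L[𝕜] StrongDual 𝕜 Y) {K : Set Y}
    (hK : IsCompact (toWeakSpace 𝕜 Y '' K)) : IsSeparable (B.flip '' K) := by
  let e : ℕ → Z := denseSeq Z
  let Φ : Y → ℕ → 𝕜 := fun y n => B (e n) y
  obtain ⟨t, htK, htc, htd⟩ :=
    (IsSeparable.of_separableSpace (Φ '' K)).exists_countable_dense_subset
  have htK' : ∀ a ∈ t, ∃ y ∈ K, Φ y = a := fun a ha => htK ha
  choose! g hgK hg using htK'
  let L : Set (StrongDual 𝕜 Z) := closure (Submodule.span 𝕜 ((fun a => B.flip (g a)) '' t))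
  have hL : IsSeparable L := ((htc.image _).isSeparable.span).closure
  refine hL.mono ?_
  rintro _ ⟨y, hy, rfl⟩
  obtain ⟨U, htU, hU⟩ := mem_closure_iff_ultrafilter.1 (htd ⟨y, hy, rfl⟩)
  obtain ⟨y', -, hlim⟩ := exists_weak_limit_of_ultrafilter hK U
    (y := g) (mem_of_superset htU fun a ha => hgK a ha)
  have hyy' : B.flip y = B.flip y' := by
    refine DFunLike.coe_injective (Continuous.ext_on (denseRange_denseSeq Z)
      (B.flip y).continuous (B.flip y').continuous ?_)
    rintro _ ⟨n, rfl⟩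
    have h1 : Tendsto (fun a : ℕ → 𝕜 => a n) U (nhds (Φ y n)) :=
      ((continuous_apply n).tendsto _).comp hU
    have h2 := hlim (B (e n))
    refine tendsto_nhds_unique h1 (h2.congr' ?_)
    filter_upwards [htU] with a ha
    exact congrFun (hg a ha) n
  rw [hyy']
  by_contra hnot
  obtain ⟨l, s, hls, hl⟩ := RCLike.geometric_hahn_banach_closed_point (𝕜 := 𝕜)
    (s := L) ((Submodule.restrictScalars ℝ (Submodule.span 𝕜 _)).convex.closure) isClosed_closure hnot
  have h3 := (RCLike.continuous_re.tendsto _).comp (hlim (l ∘L B.flip))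
  refine absurd (le_of_tendsto h3 ?_) (not_le.2 hl)
  filter_upwards [htU] with a ha
  exact (hls _ (subset_closure (Submodule.subset_span ⟨a, ha, rfl⟩))).le

/-- A function on a separable Banach space with subgradients in a weakly compact set has, on every
nonempty open set, a point of almost Fréchet differentiability. -/
theorem exists_small_second_difference_of_separable {Z : Type*} [NormedAddCommGroup Z]
    [NormedSpace 𝕜 Z] [CompleteSpace Z] [SeparableSpace Z] (B : Z →L[𝕜] StrongDual 𝕜 Y)
    {K : Set Y} (hK : IsCompact (toWeakSpace 𝕜 Y '' K)) {R : ℝ} (hR : ∀ y ∈ K, ‖y‖ ≤ R)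
    {p : Z → ℝ} (hp : Continuous p)
    (hsub : ∀ z, ∃ y ∈ K, ∀ w, p z + RCLike.re (B (w - z) y) ≤ p w)
    {G : Set Z} (hG : IsOpen G) (hGne : G.Nonempty) {c : ℝ} (hc : 0 < c) :
    ∃ z ∈ G, ∃ r > 0, ∀ h, ‖h‖ ≤ r → p (z + h) + p (z - h) - 2 * p z ≤ c * ‖h‖ := by
  obtain ⟨t, -, htc, htd⟩ :=
    (isSeparable_flip_image_of_isCompact_weak B hK).exists_countable_dense_subset
  have : Countable t := htc.to_subtype
  let A : t → Set Z := fun a => {z | ∃ y ∈ K, (∀ h, ‖B h y - a.1 h‖ ≤ c / 2 * ‖h‖) ∧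
    ∀ w, p z + RCLike.re (B (w - z) y) ≤ p w}
  have hAc : ∀ a, IsClosed (A a) := by
    intro a
    refine isClosed_of_closure_subset fun z hz => ?_
    obtain ⟨U, hAU, hU⟩ := mem_closure_iff_ultrafilter.1 hz
    have hAU' : ∀ v ∈ A a, ∃ y ∈ K, (∀ h, ‖B h y - a.1 h‖ ≤ c / 2 * ‖h‖) ∧
      ∀ w, p v + RCLike.re (B (w - v) y) ≤ p w := fun v hv => hv
    choose! y hyK hya hyp using hAU'
    obtain ⟨y₀, hy₀, hlim⟩ := exists_weak_limit_of_ultrafilter hK U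
      (y := y) (mem_of_superset hAU fun v hv => hyK v hv)
    refine ⟨y₀, hy₀, fun h => ?_, fun w => ?_⟩
    · refine le_of_tendsto (((hlim (B h)).sub_const (a.1 h)).norm) ?_
      filter_upwards [hAU] with v hv using hya v hv h
    · have hUz : Tendsto (fun v : Z => v) U (nhds z) := hU
      have h1 : Tendsto (fun v => B (w - v) (y v) - B (w - z) (y v)) U (nhds 0) := by
        have h0 : Tendsto (fun v => ‖B‖ * ‖z - v‖ * R) U (nhds 0) := by
          have : Continuous fun v => ‖B‖ * ‖z - v‖ * R := by fun_prop
          simpa [Function.comp_def] using (this.tendsto z).comp hUz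
        refine squeeze_zero_norm' ?_ h0
        filter_upwards [hAU] with v hv
        have : B (w - v) (y v) - B (w - z) (y v) = B (z - v) (y v) := by
          simp only [map_sub, sub_apply]; ring
        rw [this]
        refine (B.le_opNorm₂ _ _).trans ?_
        gcongr
        exact hR _ (hyK v hv)
      have h2 : Tendsto (fun v => B (w - v) (y v)) U (nhds (B (w - z) y₀)) := by
        simpa using h1.add (hlim (B (w - z)))
      refine le_of_tendsto (((hp.tendsto z).comp hUz).add
        ((RCLike.continuous_re.tendsto _).comp h2)) ?_
      filter_upwards [hAU] with v hv using hyp v hv w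
  have hAu : ⋃ a, A a = Set.univ := by
    refine Set.eq_univ_of_forall fun z => ?_
    obtain ⟨y, hy, hyp⟩ := hsub z
    obtain ⟨a, hat, ha⟩ := Metric.mem_closure_iff.1 (htd ⟨y, hy, rfl⟩) (c / 2) (by positivity)
    refine Set.mem_iUnion.2 ⟨⟨a, hat⟩, y, hy, fun h => ?_, hyp⟩
    rw [dist_eq_norm] at ha
    exact (B.flip y - a).le_of_opNorm_le ha.le h
  obtain ⟨z, hz, hzG⟩ := (dense_iUnion_interior_of_closed hAc hAu).inter_open_nonempty G hG hGne
  obtain ⟨a, ha⟩ := Set.mem_iUnion.1 hzG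
  obtain ⟨r, hr, hball⟩ := Metric.isOpen_iff.1 isOpen_interior z ha
  refine ⟨z, hz, r / 2, by positivity, fun h hh => ?_⟩
  obtain ⟨y₁, -, hy₁a, hy₁⟩ : z + h ∈ A a :=
    interior_subset (hball (by rw [mem_ball_iff_norm]; simpa using by linarith))
  obtain ⟨y₂, -, hy₂a, hy₂⟩ : z - h ∈ A a :=
    interior_subset (hball (by rw [mem_ball_iff_norm]; simpa using by linarith))
  have e₁ := hy₁ z
  have e₂ := hy₂ z
  rw [sub_add_cancel_left, map_neg, neg_apply, map_neg] at e₁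
  rw [sub_sub_cancel] at e₂
  have e₃ : RCLike.re (B h y₁) - RCLike.re (B h y₂) ≤ c * ‖h‖ := by
    rw [← map_sub]
    calc _ ≤ ‖B h y₁ - B h y₂‖ := RCLike.re_le_norm _
      _ ≤ ‖B h y₁ - a.1 h‖ + ‖B h y₂ - a.1 h‖ := by
        rw [← norm_neg (B h y₂ - a.1 h)]
        refine le_trans (le_of_eq ?_) (norm_add_le _ _)
        congr 1; ring
      _ ≤ c * ‖h‖ := by linarith [hy₁a h, hy₂a h]
  linarith

theorem exists_mem_second_difference_of_mem_closure {E : Type*} [NormedAddCommGroup E]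
    {p : E → ℝ} {L : ℝ} (hL : ∀ a b, p a - p b ≤ L * ‖a - b‖) {c : ℝ} (hc : 0 < c)
    {t : Set E} {z : E} (hz : z ∈ closure t) (n : ℕ) :
    ∃ v ∈ t, ∀ h, c * (1 / (n + 1 : ℝ)) ≤ p (v + h) + p (v - h) - 2 * p v →
      c / 2 * (1 / (n + 1 : ℝ)) ≤ p (z + h) + p (z - h) - 2 * p z := by
  obtain ⟨v, hvt, hv⟩ := Metric.mem_closure_iff.1 hz
    (c / 2 * (1 / (n + 1 : ℝ)) / (4 * (|L| + 1))) (by positivity)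
  refine ⟨v, hvt, fun h hh => ?_⟩
  have hb : |L| * ‖z - v‖ ≤ c / 2 * (1 / (n + 1 : ℝ)) / 4 := by
    rw [dist_eq_norm, lt_div_iff₀ (by positivity)] at hv
    nlinarith [norm_nonneg (z - v)]
  have hd : ∀ a b, ‖a - b‖ = ‖z - v‖ → p a - p b ≤ c / 2 * (1 / (n + 1 : ℝ)) / 4 := by
    intro a b hab
    refine (hL a b).trans (le_trans ?_ hb)
    rw [hab]
    gcongr
    exact le_abs_self L
  have h1 := hd (v + h) (z + h) (by rw [add_sub_add_right_eq_sub, norm_sub_rev])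
  have h2 := hd (v - h) (z - h) (by rw [sub_sub_sub_cancel_right, norm_sub_rev])
  have h3 := hd z v rfl
  linarith

theorem exists_countable_witnesses {E : Type*} [NormedAddCommGroup E] [NormedSpace 𝕜 E]
    {p : E → ℝ} {L : ℝ} (hL : ∀ a b, p a - p b ≤ L * ‖a - b‖) {G : Set E} {c : ℝ} (hc : 0 < c)
    (hwit : ∀ z ∈ G, ∀ n : ℕ, ∃ h, ‖h‖ ≤ 1 / (n + 1 : ℝ) ∧
      c * (1 / (n + 1 : ℝ)) ≤ p (z + h) + p (z - h) - 2 * p z) (C : Set E) (hC : C.Countable) :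
    ∃ D : Set E, D.Countable ∧ C ⊆ D ∧ ∀ z ∈ (Submodule.span 𝕜 C : Set E) ∩ G, ∀ n : ℕ,
      ∃ h ∈ D, ‖h‖ ≤ 1 / (n + 1 : ℝ) ∧
        c / 2 * (1 / (n + 1 : ℝ)) ≤ p (z + h) + p (z - h) - 2 * p z := by
  choose! H hH hHp using hwit
  obtain ⟨t, hts, htc, htd⟩ := ((hC.isSeparable.span (R := 𝕜)).mono
    (Set.inter_subset_left (t := G))).exists_countable_dense_subset
  refine ⟨C ∪ ⋃ n, (fun z => H z n) '' t, hC.union (Set.countable_iUnion fun n => htc.image _),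
    Set.subset_union_left, fun z hz n => ?_⟩
  obtain ⟨v, hvt, hv⟩ := exists_mem_second_difference_of_mem_closure hL hc (htd hz) n
  exact ⟨H v n, Or.inr (Set.mem_iUnion.2 ⟨n, v, hvt, rfl⟩), hH v (hts hvt).2 n,
    hv _ (hHp v (hts hvt).2 n)⟩

/-- Failure of almost Fréchet differentiability on an open set is inherited by some closed separable
subspace. -/
theorem exists_separable_submodule_witnesses {E : Type*} [NormedAddCommGroup E] [NormedSpace 𝕜 E]
    {p : E → ℝ} {L : ℝ} (hL : ∀ a b, p a - p b ≤ L * ‖a - b‖) {G : Set E} (hG : IsOpen G)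
    (hGne : G.Nonempty) {c : ℝ} (hc : 0 < c)
    (hwit : ∀ z ∈ G, ∀ n : ℕ, ∃ h, ‖h‖ ≤ 1 / (n + 1 : ℝ) ∧
      c * (1 / (n + 1 : ℝ)) ≤ p (z + h) + p (z - h) - 2 * p z) :
    ∃ Z : Submodule 𝕜 E, IsClosed (Z : Set E) ∧ IsSeparable (Z : Set E) ∧
      ((Z : Set E) ∩ G).Nonempty ∧ ∀ z ∈ (Z : Set E) ∩ G, ∀ n : ℕ,
      ∃ h ∈ Z, ‖h‖ ≤ 1 / (n + 1 : ℝ) ∧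
        c / 2 / 2 * (1 / (n + 1 : ℝ)) ≤ p (z + h) + p (z - h) - 2 * p z := by
  obtain ⟨z₀, hz₀⟩ := hGne
  choose F hFc hFsub hF using exists_countable_witnesses (𝕜 := 𝕜) hL hc hwit
  let S : ℕ → {C : Set E // C.Countable} := fun k =>
    Nat.rec ⟨{z₀}, Set.countable_singleton z₀⟩ (fun _ C => ⟨F C.1 C.2, hFc C.1 C.2⟩) k
  have hmono : Monotone fun k => (S k).1 := monotone_nat_of_le_succ fun k => hFsub _ (S k).2
  let D : Set E := ⋃ k, (S k).1
  have hSD : ∀ k, (S k).1 ⊆ D := fun k => Set.subset_iUnion (fun k => (S k).1) k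
  have hDc : D.Countable := Set.countable_iUnion fun k => (S k).2
  let Z : Submodule 𝕜 E := (Submodule.span 𝕜 D).topologicalClosure
  have hDZ : D ⊆ Z := fun x hx =>
    (Submodule.span 𝕜 D).le_topologicalClosure (Submodule.subset_span hx)
  refine ⟨Z, Submodule.isClosed_topologicalClosure _, (hDc.isSeparable.span (R := 𝕜)).closure,
    ⟨z₀, hDZ (hSD 0 rfl), hz₀⟩, fun z hz n => ?_⟩
  have hzcl : z ∈ closure ((Submodule.span 𝕜 D : Set E) ∩ G) := by
    rw [Set.inter_comm]
    exact hG.inter_closure ⟨hz.2, hz.1⟩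
  obtain ⟨v, ⟨hvD, hvG⟩, hv⟩ := exists_mem_second_difference_of_mem_closure hL (half_pos hc) hzcl n
  obtain ⟨k, hk⟩ : ∃ k, v ∈ Submodule.span 𝕜 (S k).1 := by
    rw [SetLike.mem_coe, Submodule.span_iUnion, Submodule.mem_iSup_of_directed _
      (Monotone.directed_le fun i j hij => Submodule.span_mono (hmono hij))] at hvD
    exact hvD
  obtain ⟨h, hhF, hhn, hhp⟩ := hF _ (S k).2 v ⟨hk, hvG⟩ n
  exact ⟨h, hDZ (hSD (k + 1) hhF), hhn, hv h hhp⟩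

theorem exists_small_second_difference {K : Set Y}
    (hK : IsCompact (toWeakSpace 𝕜 Y '' K)) {R : ℝ} (hR : ∀ y ∈ K, ‖y‖ ≤ R)
    {p : StrongDual 𝕜 Y → ℝ} (hp : ∀ a b, p a - p b ≤ R * ‖a - b‖)
    (hsub : ∀ z, ∃ y ∈ K, ∀ w, p z + RCLike.re ((w - z) y) ≤ p w)
    {G : Set (StrongDual 𝕜 Y)} (hG : IsOpen G) (hGne : G.Nonempty) {c : ℝ} (hc : 0 < c) :
    ∃ z ∈ G, ∃ r > 0, ∀ h, ‖h‖ ≤ r → p (z + h) + p (z - h) - 2 * p z < c * r := by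
  by_contra! hcon
  obtain ⟨Z, hZc, hZs, ⟨z₀, hz₀Z, hz₀G⟩, hZ⟩ := exists_separable_submodule_witnesses (𝕜 := 𝕜) hp
    hG hGne hc fun z hz n => hcon z hz (1 / (n + 1 : ℝ)) (by positivity)
  have : CompleteSpace Z := hZc.completeSpace_coe
  have : SeparableSpace Z := hZs.separableSpace
  have hpc : Continuous p := by
    refine LipschitzWith.continuous (K := R.toNNReal) (LipschitzWith.of_le_add_mul' R fun a b => ?_)
    rw [dist_eq_norm]
    linarith [hp a b]
  obtain ⟨z, hzG, r, hr, hzr⟩ := exists_small_second_difference_of_separable Z.subtypeL hK hR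
    (p := fun z : Z => p z) (hpc.comp continuous_subtype_val)
    (fun z => (hsub z).imp fun y hy => ⟨hy.1, fun w => hy.2 w⟩)
    (hG.preimage continuous_subtype_val) ⟨⟨z₀, hz₀Z⟩, hz₀G⟩ (c := c / 8) (by positivity)
  obtain ⟨n, hn⟩ := exists_nat_one_div_lt hr
  obtain ⟨h, hhZ, hhn, hhp⟩ := hZ z ⟨z.2, hzG⟩ n
  have h1 := hzr ⟨h, hhZ⟩ (hhn.trans hn.le)
  have h2 : p (z + h) + p (z - h) - 2 * p z ≤ c / 8 * (1 / (n + 1 : ℝ)) :=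
    h1.trans (by gcongr; exact hhn)
  have h3 : 0 < c * (1 / (n + 1 : ℝ)) := by positivity
  linarith

section Perturbation

variable {K : Set Y} {f : Y → ℝ} {p : StrongDual 𝕜 Y → ℝ} {R : ℝ}

theorem isLUB_sub_le (hR : ∀ y ∈ K, ‖y‖ ≤ R)
    (hp : ∀ z, IsLUB ((fun y => f y + RCLike.re (z y)) '' K) (p z)) (a b : StrongDual 𝕜 Y) :
    p a - p b ≤ R * ‖a - b‖ := by
  rw [sub_le_iff_le_add]
  refine (hp a).2 ?_
  rintro _ ⟨y, hy, rfl⟩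
  have h1 : f y + RCLike.re (b y) ≤ p b := (hp b).1 ⟨y, hy, rfl⟩
  have h2 : RCLike.re ((a - b) y) ≤ R * ‖a - b‖ :=
    (RCLike.re_le_norm _).trans (((a - b).le_opNorm y).trans (by
      rw [mul_comm]; gcongr; exact hR y hy))
  rw [sub_apply, map_sub] at h2
  simp only
  linarith

theorem exists_mem_subgradient (hK : IsCompact (toWeakSpace 𝕜 Y '' K)) (hne : K.Nonempty)
    (hp : ∀ z, IsLUB ((fun y => f y + RCLike.re (z y)) '' K) (p z)) (z : StrongDual 𝕜 Y) :
    ∃ y ∈ K, ∀ w, p z + RCLike.re ((w - z) y) ≤ p w := by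
  obtain ⟨s, -, -, hs, hsK⟩ := (hp z).exists_seq_monotone_tendsto (hne.image _)
  choose y hyK hys using hsK
  obtain ⟨y₀, hy₀, hlim⟩ := exists_weak_limit_of_ultrafilter hK (Ultrafilter.of atTop)
    (y := y) (.of_forall hyK)
  refine ⟨y₀, hy₀, fun w => ?_⟩
  refine le_of_tendsto ((hs.mono_left (Ultrafilter.of_le atTop)).add
    ((RCLike.continuous_re.tendsto _).comp (hlim (w - z)))) (.of_forall fun n => ?_)
  have h1 : f (y n) + RCLike.re (w (y n)) ≤ p w := (hp w).1 ⟨y n, hyK n, rfl⟩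
  have h2 := hys n
  simp only [Function.comp_apply, sub_apply, map_sub] at h2 ⊢
  linarith

theorem norm_sub_le_of_second_difference
    (hp : ∀ z, IsLUB ((fun y => f y + RCLike.re (z y)) '' K) (p z)) {z : StrongDual 𝕜 Y}
    {r c : ℝ} (hr : 0 < r)
    (hz : ∀ h, ‖h‖ ≤ r → p (z + h) + p (z - h) - 2 * p z < c * r) {y₁ y₂ : Y}
    (hy₁ : y₁ ∈ K) (hy₂ : y₂ ∈ K) (h₁ : p z - c * r < f y₁ + RCLike.re (z y₁))
    (h₂ : p z - c * r < f y₂ + RCLike.re (z y₂)) : ‖y₁ - y₂‖ ≤ 3 * c := by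
  obtain ⟨g, hg, hgy⟩ := exists_dual_vector'' 𝕜 (y₁ - y₂)
  have e := hz ((r : 𝕜) • g) (by
    rw [norm_smul, RCLike.norm_ofReal, abs_of_pos hr]
    exact mul_le_of_le_one_right hr.le hg)
  have e₁ : f y₁ + RCLike.re ((z + (r : 𝕜) • g) y₁) ≤ p (z + (r : 𝕜) • g) :=
    (hp _).1 ⟨y₁, hy₁, rfl⟩
  have e₂ : f y₂ + RCLike.re ((z - (r : 𝕜) • g) y₂) ≤ p (z - (r : 𝕜) • g) :=
    (hp _).1 ⟨y₂, hy₂, rfl⟩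
  have e₃ : RCLike.re (g y₁) - RCLike.re (g y₂) = ‖y₁ - y₂‖ := by
    rw [← map_sub, ← map_sub, hgy, RCLike.ofReal_re]
  simp only [add_apply, sub_apply, smul_apply, smul_eq_mul, map_add, map_sub,
    RCLike.re_ofReal_mul] at e₁ e₂
  have e₄ : r * ‖y₁ - y₂‖ ≤ r * (3 * c) := by rw [← e₃]; linarith
  exact le_of_mul_le_mul_left e₄ hr

/-- **Stegall's variational principle** for weakly compact sets: a function bounded above on a
weakly compact set has arbitrarily small linear perturbations whose sets of almost maximizers
shrink to a point. -/
theorem exists_perturbation_small_slices (hK : IsCompact (toWeakSpace 𝕜 Y '' K))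
    (hne : K.Nonempty) (hR : ∀ y ∈ K, ‖y‖ ≤ R) (hf : BddAbove (f '' K)) {η : ℝ} (hη : 0 < η) :
    ∃ (z : StrongDual 𝕜 Y) (M : ℝ), ‖z‖ < η ∧
      IsLUB ((fun y => f y + RCLike.re (z y)) '' K) M ∧
      ∀ ε > 0, ∃ δ > 0, ∀ y₁ ∈ K, ∀ y₂ ∈ K, M - δ < f y₁ + RCLike.re (z y₁) →
        M - δ < f y₂ + RCLike.re (z y₂) → ‖y₁ - y₂‖ ≤ ε := by
  have hex : ∀ z : StrongDual 𝕜 Y, ∃ M, IsLUB ((fun y => f y + RCLike.re (z y)) '' K) M := by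
    intro z
    obtain ⟨C, hC⟩ := hf
    refine ⟨_, isLUB_csSup (hne.image _) ⟨C + ‖z‖ * R, ?_⟩⟩
    rintro _ ⟨y, hy, rfl⟩
    refine add_le_add (hC ⟨y, hy, rfl⟩) ((RCLike.re_le_norm _).trans ((z.le_opNorm y).trans ?_))
    gcongr
    exact hR y hy
  choose p hp using hex
  let O : ℕ → Set (StrongDual 𝕜 Y) := fun n => {z | ∃ δ > 0, ∀ y₁ ∈ K, ∀ y₂ ∈ K,
    p z - δ < f y₁ + RCLike.re (z y₁) → p z - δ < f y₂ + RCLike.re (z y₂) →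
      ‖y₁ - y₂‖ ≤ 1 / (n + 1 : ℝ)}
  have hOo : ∀ n, IsOpen (O n) := by
    refine fun n => Metric.isOpen_iff.2 fun z ⟨δ, hδ, hz⟩ => ?_
    refine ⟨δ / (4 * (|R| + 1)), by positivity, fun w hw => ⟨δ / 2, by positivity, ?_⟩⟩
    have hwz : |R| * ‖w - z‖ ≤ δ / 4 := by
      rw [mem_ball_iff_norm, lt_div_iff₀ (by positivity)] at hw
      nlinarith [norm_nonneg (w - z)]
    have hslice : ∀ y ∈ K, p w - δ / 2 < f y + RCLike.re (w y) →
        p z - δ < f y + RCLike.re (z y) := by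
      intro y hy hyw
      have h1 : p z - p w ≤ δ / 4 := (isLUB_sub_le hR hp z w).trans (le_trans (by
        rw [norm_sub_rev]; gcongr; exact le_abs_self R) hwz)
      have h2 : RCLike.re ((w - z) y) ≤ δ / 4 :=
        (RCLike.re_le_norm _).trans (((w - z).le_opNorm y).trans (le_trans (by
          rw [mul_comm]; gcongr; exact (hR y hy).trans (le_abs_self R)) hwz))
      rw [sub_apply, map_sub] at h2
      linarith
    exact fun y₁ hy₁ y₂ hy₂ h₁ h₂ => hz y₁ hy₁ y₂ hy₂ (hslice y₁ hy₁ h₁) (hslice y₂ hy₂ h₂)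
  have hOd : ∀ n, Dense (O n) := by
    refine fun n => dense_iff_inter_open.2 fun G hG hGne => ?_
    obtain ⟨z, hzG, r, hr, hz⟩ := exists_small_second_difference hK hR (isLUB_sub_le hR hp)
      (exists_mem_subgradient hK hne hp) hG hGne (c := 1 / (n + 1 : ℝ) / 3) (by positivity)
    refine ⟨z, hzG, 1 / (n + 1 : ℝ) / 3 * r, by positivity, fun y₁ hy₁ y₂ hy₂ h₁ h₂ => ?_⟩
    exact (norm_sub_le_of_second_difference hp hr hz hy₁ hy₂ h₁ h₂).trans_eq (by ring)
  obtain ⟨z, hzη, hzO⟩ := (dense_iInter_of_isOpen_nat hOo hOd).inter_open_nonempty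
    (Metric.ball 0 η) Metric.isOpen_ball ⟨0, Metric.mem_ball_self hη⟩
  refine ⟨z, p z, mem_ball_zero_iff.1 hzη, hp z, fun ε hε => ?_⟩
  obtain ⟨n, hn⟩ := exists_nat_one_div_lt hε
  obtain ⟨δ, hδ, hz⟩ := Set.mem_iInter.1 hzO n
  exact ⟨δ, hδ, fun y₁ hy₁ y₂ hy₂ h₁ h₂ => (hz y₁ hy₁ y₂ hy₂ h₁ h₂).trans hn.le⟩

theorem exists_perturbation_strong_max [CompleteSpace Y] (hK : IsCompact (toWeakSpace 𝕜 Y '' K))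
    (hKc : IsClosed K) (hne : K.Nonempty) (hR : ∀ y ∈ K, ‖y‖ ≤ R) (hf : BddAbove (f '' K))
    (hfc : Continuous f) {η : ℝ} (hη : 0 < η) :
    ∃ z : StrongDual 𝕜 Y, ‖z‖ < η ∧ ∃ u ∈ K,
      (∀ y ∈ K, f y + RCLike.re (z y) ≤ f u + RCLike.re (z u)) ∧
      ∀ y : ℕ → Y, (∀ n, y n ∈ K) →
        Tendsto (fun n => f (y n) + RCLike.re (z (y n))) atTop
          (nhds (f u + RCLike.re (z u))) → Tendsto y atTop (nhds u) := by
  obtain ⟨z, M, hz, hM, hslice⟩ := exists_perturbation_small_slices hK hne hR hf hη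
  have hclose : ∀ s t : ℕ → Y, (∀ n, s n ∈ K) → (∀ n, t n ∈ K) →
      Tendsto (fun n => f (s n) + RCLike.re (z (s n))) atTop (nhds M) →
      Tendsto (fun n => f (t n) + RCLike.re (z (t n))) atTop (nhds M) →
      ∀ ε > 0, ∃ N, ∀ m ≥ N, ∀ n ≥ N, dist (s m) (t n) < ε := by
    intro s t hsK htK hs ht ε hε
    obtain ⟨δ, hδ, hd⟩ := hslice (ε / 2) (by positivity)
    obtain ⟨N, hN⟩ := eventually_atTop.1 ((hs.eventually_const_lt (sub_lt_self M hδ)).and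
      (ht.eventually_const_lt (sub_lt_self M hδ)))
    refine ⟨N, fun m hm n hn => ?_⟩
    rw [dist_eq_norm]
    linarith [hd _ (hsK m) _ (htK n) (hN m hm).1 (hN n hn).2]
  obtain ⟨s, -, -, hs, hsK⟩ := hM.exists_seq_monotone_tendsto (hne.image _)
  choose y hyK hys using hsK
  have hyM : Tendsto (fun n => f (y n) + RCLike.re (z (y n))) atTop (nhds M) :=
    hs.congr fun n => (hys n).symm
  obtain ⟨u, hu⟩ := cauchySeq_tendsto_of_complete
    (Metric.cauchySeq_iff.2 (hclose y y hyK hyK hyM hyM))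
  have huK : u ∈ K := hKc.mem_of_tendsto hu (.of_forall hyK)
  have hcont : Continuous fun y => f y + RCLike.re (z y) :=
    hfc.add (RCLike.continuous_re.comp z.continuous)
  have huM : f u + RCLike.re (z u) = M := tendsto_nhds_unique ((hcont.tendsto u).comp hu) hyM
  refine ⟨z, hz, u, huK, fun y hy => huM ▸ hM.1 ⟨y, hy, rfl⟩, fun w hwK hw => ?_⟩
  rw [huM] at hw
  refine Metric.tendsto_atTop.2 fun ε hε => ?_
  obtain ⟨N, hN⟩ := hclose w (fun _ => u) hwK (fun _ => huK) hw
    (by rw [huM]; exact tendsto_const_nhds) ε hε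
  exact ⟨N, fun n hn => hN n hn N le_rfl⟩

end Perturbation

/-- Weakly compact operators are stable under composition with a bounded operator on the left. -/
theorem IsWeaklyCompactOperator.comp_left {T : X →L[𝕜] Y} (hT : IsWeaklyCompactOperator T)
    {W : Type*} [NormedAddCommGroup W] [NormedSpace 𝕜 W] (A : Y →L[𝕜] W) :
    IsWeaklyCompactOperator (A ∘L T) := by
  have himg : IsCompact (toWeakSpace 𝕜 W '' (A '' closure (T '' Metric.closedBall 0 1))) := by
    have h := hT.image (WeakSpace.map A).continuous
    rw [Set.image_image] at h ⊢
    exact h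
  have hclosed : IsClosed (A '' closure (T '' Metric.closedBall 0 1)) := by
    have h := himg.isClosed.preimage (toWeakSpaceCLM 𝕜 W).continuous
    have e : toWeakSpaceCLM 𝕜 W ⁻¹' (toWeakSpace 𝕜 W ''
        (A '' closure (T '' Metric.closedBall 0 1))) = A '' closure (T '' Metric.closedBall 0 1) :=
      Set.preimage_image_eq _ (toWeakSpace 𝕜 W).injective
    rwa [e] at h
  have heq : closure ((A ∘L T) '' Metric.closedBall 0 1) =
      A '' closure (T '' Metric.closedBall 0 1) := by
    rw [ContinuousLinearMap.coe_comp, Set.image_comp]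
    exact (closure_minimal (Set.image_mono subset_closure) hclosed).antisymm
      (image_closure_subset_closure_image A.continuous)
  rw [IsWeaklyCompactOperator, heq]
  exact himg

/-- weakly compact operators which uniquely quasi attain their norm are dense (in
operator norm) in the space of weakly compact operators. -/
theorem weakly_compact_uniquely_quasi_attaining_dense
    {𝕜 X Y : Type*} [RCLike 𝕜]
    [NormedAddCommGroup X] [NormedSpace 𝕜 X] [CompleteSpace X]
    [NormedAddCommGroup Y] [NormedSpace 𝕜 Y] [CompleteSpace Y]
    (T : X →L[𝕜] Y) (hT : IsWeaklyCompactOperator T) (ε : ℝ) (hε : 0 < ε) :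
    ∃ S : X →L[𝕜] Y, IsWeaklyCompactOperator S ∧ UniquelyQuasiAttainsNorm S ∧ ‖S - T‖ < ε := by
  let K : Set Y := closure (T '' Metric.closedBall 0 1)
  have hTK : ∀ x ∈ Metric.closedBall (0 : X) 1, T x ∈ K := fun x hx => subset_closure ⟨x, hx, rfl⟩
  have hR : ∀ y ∈ K, ‖y‖ ≤ ‖T‖ := by
    have hsub : K ⊆ Metric.closedBall 0 ‖T‖ := by
      refine closure_minimal ?_ Metric.isClosed_closedBall
      rintro _ ⟨x, hx, rfl⟩
      rw [mem_closedBall_zero_iff] at hx ⊢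
      exact T.unit_le_opNorm x hx
    exact fun y hy => mem_closedBall_zero_iff.1 (hsub hy)
  obtain ⟨z, hz, u, huK, hmax, hstrong⟩ := exists_perturbation_strong_max (f := fun y : Y => ‖y‖)
    hT isClosed_closure ⟨T 0, hTK 0 (Metric.mem_closedBall_self zero_le_one)⟩ hR
    ⟨‖T‖, by rintro _ ⟨y, hy, rfl⟩; exact hR y hy⟩ continuous_norm
    (η := ε / (‖T‖ + 1)) (by positivity)
  have hrot : ∀ x ∈ Metric.closedBall (0 : X) 1, ∃ θ : 𝕜, ‖θ‖ = 1 ∧ T (θ • x) ∈ K ∧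
      ‖T (θ • x)‖ + RCLike.re (z (T (θ • x))) = ‖T x‖ + ‖z (T x)‖ := by
    intro x hx
    obtain ⟨θ, hθ, h⟩ := RCLike.exists_norm_eq_mul_self (z (T x))
    refine ⟨θ, hθ, hTK _ ?_, ?_⟩
    · rw [mem_closedBall_zero_iff] at hx ⊢
      rwa [norm_smul, hθ, one_mul]
    · rw [map_smul, map_smul, norm_smul, hθ, one_mul, smul_eq_mul, ← h, RCLike.ofReal_re]
  have hbound : ∀ y ∈ K, ‖y‖ + ‖z y‖ ≤ ‖u‖ + RCLike.re (z u) := by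
    have hsub : K ⊆ {y | ‖y‖ + ‖z y‖ ≤ ‖u‖ + RCLike.re (z u)} := by
      refine closure_minimal ?_ (isClosed_le (by fun_prop) continuous_const)
      rintro _ ⟨x, hx, rfl⟩
      obtain ⟨θ, -, hθK, hθ⟩ := hrot x hx
      exact hθ.ge.trans (hmax _ hθK)
    exact hsub
  have hzu : z u = (RCLike.re (z u) : 𝕜) ∧ 0 ≤ RCLike.re (z u) := by
    have h1 : RCLike.re (z u) = ‖z u‖ :=
      le_antisymm (RCLike.re_le_norm _) (by linarith [hbound u huK])
    exact ⟨by rw [h1]; exact RCLike.norm_le_re_iff_eq_norm.1 h1.ge, h1 ▸ norm_nonneg _⟩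
  let v : Y := ((‖u‖⁻¹ : ℝ) : 𝕜) • u
  have hv : ‖v‖ ≤ 1 := by
    rw [norm_smul, RCLike.norm_ofReal, abs_of_nonneg (by positivity)]
    exact inv_mul_le_one
  let A : Y →L[𝕜] Y := ContinuousLinearMap.id 𝕜 Y + z.smulRight v
  have hA : ∀ y, A y = y + z y • v := fun y => rfl
  have hAle : ∀ y, ‖A y‖ ≤ ‖y‖ + ‖z y‖ := fun y => by
    rw [hA]
    refine (norm_add_le _ _).trans ?_
    gcongr
    rw [norm_smul]
    exact mul_le_of_le_one_right (norm_nonneg _) hv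
  have hAu : ‖A u‖ = ‖u‖ + RCLike.re (z u) := by
    rcases eq_or_ne u 0 with rfl | hu
    · simp
    have hu' : 0 < ‖u‖ := norm_pos_iff.2 hu
    have e : A u = ((1 + RCLike.re (z u) * ‖u‖⁻¹ : ℝ) : 𝕜) • u := by
      rw [hA, smul_smul]
      push_cast
      rw [add_smul, one_smul]
      congr 3
      exact hzu.1
    have hpos : 0 ≤ 1 + RCLike.re (z u) * ‖u‖⁻¹ :=
      add_nonneg zero_le_one (mul_nonneg hzu.2 (by positivity))
    rw [e, norm_smul, RCLike.norm_ofReal, abs_of_nonneg hpos]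
    field_simp
  have hnorm : ‖A ∘L T‖ = ‖u‖ + RCLike.re (z u) := by
    refine le_antisymm (ContinuousLinearMap.opNorm_le_of_unit_norm
      (add_nonneg (norm_nonneg _) hzu.2) fun x hx => ?_) ?_
    · exact (hAle _).trans (hbound _ (hTK x (mem_closedBall_zero_iff.2 hx.le)))
    · have hsub : K ⊆ {y | ‖A y‖ ≤ ‖A ∘L T‖} := by
        refine closure_minimal ?_ (isClosed_le (by fun_prop) continuous_const)
        rintro _ ⟨x, hx, rfl⟩
        exact (A ∘L T).unit_le_opNorm x (mem_closedBall_zero_iff.1 hx)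
      exact hAu ▸ hsub huK
  refine ⟨A ∘L T, hT.comp_left A, ⟨A u, fun x hx hlim => ?_⟩, ?_⟩
  · choose θ hθ hθK hθx using fun n => hrot (x n) (hx n)
    rw [hnorm] at hlim
    have hw : Tendsto (fun n => T (θ n • x n)) atTop (nhds u) := by
      refine hstrong _ hθK (tendsto_of_tendsto_of_tendsto_of_le_of_le hlim tendsto_const_nhds
        (fun n => ?_) fun n => hmax _ (hθK n))
      exact (hAle _).trans (hθx n).ge
    obtain ⟨θ₀, hθ₀, σ, hσ, hσθ⟩ := (isCompact_sphere (0 : 𝕜) 1).tendsto_subseq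
      (fun n => mem_sphere_zero_iff_norm.2 (hθ n))
    rw [mem_sphere_zero_iff_norm] at hθ₀
    have hθ₀ne : θ₀ ≠ 0 := norm_ne_zero_iff.1 (by rw [hθ₀]; exact one_ne_zero)
    refine ⟨σ, hσ, θ₀⁻¹, by rw [norm_inv, hθ₀, inv_one], ?_⟩
    have h1 := (hσθ.inv₀ hθ₀ne).smul
      ((A.continuous.tendsto u).comp (hw.comp hσ.tendsto_atTop))
    refine h1.congr fun n => ?_
    have hne : θ (σ n) ≠ 0 := norm_ne_zero_iff.1 (by rw [hθ]; exact one_ne_zero)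
    simp [smul_smul, inv_mul_cancel₀ hne]
  · have hdiff : ‖A ∘L T - T‖ ≤ ‖z‖ * ‖T‖ := by
      refine ContinuousLinearMap.opNorm_le_bound _ (by positivity) fun x => ?_
      have e : (A ∘L T - T) x = z (T x) • v := add_sub_cancel_left _ _
      rw [e, norm_smul, mul_assoc]
      refine (mul_le_of_le_one_right (norm_nonneg _) hv).trans ((z.le_opNorm _).trans ?_)
      gcongr
      exact T.le_opNorm x
    rw [lt_div_iff₀ (by positivity)] at hz
    nlinarith [norm_nonneg z]
end

section
/- Let X be a Banach space over 𝕂 (= ℝ or ℂ). The following are equivalent: (a) X is reflexive (the canonical embedding of X into its bidual X** is surjective); (b) NA(X,Y) = QNA(X,Y) for every Banach space Y over 𝕂; (c) there exists a nontrivial (nonzero) Banach space Y over 𝕂 such that NA(X,Y) = QNA(X,Y). -/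
/-- A witness for statement (c): a nontrivial Banach space `Y` over `𝕜` such that
`NA(X,Y) = QNA(X,Y)`. -/
structure NAEqQNAWitness (𝕜 : Type) [RCLike 𝕜] (X : Type)
    [NormedAddCommGroup X] [NormedSpace 𝕜 X] : Type 1 where
  Y : Type
  [instNorm : NormedAddCommGroup Y]
  [instSpace : NormedSpace 𝕜 Y]
  [instComplete : CompleteSpace Y]
  [instNontrivial : Nontrivial Y]
  na_eq_qna : {T : X →L[𝕜] Y | ∃ x₀ : X, ‖x₀‖ = 1 ∧ ‖T x₀‖ = ‖T‖} =
    {T : X →L[𝕜] Y | ∃ u ∈ closure (⇑T '' Metric.closedBall 0 1), ‖u‖ = ‖T‖}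

open Filter Topology

/-- Dependent choice for an invariant indexed by the stage of the construction. -/
theorem exists_seq_of_forall_exists_succ {α : Type*} (P : ℕ → α → Prop) (R : ℕ → α → α → Prop)
    (a : α) (ha : P 0 a) (h : ∀ n b, P n b → ∃ c, P (n + 1) c ∧ R n b c) :
    ∃ s : ℕ → α, s 0 = a ∧ ∀ n, P n (s n) ∧ R n (s n) (s (n + 1)) := by
  choose! next hP hR using h
  let s : ℕ → α := fun n => Nat.rec a (fun k b => next k b) n
  have hs : ∀ n, P n (s n) := by
    intro n
    induction n with
    | zero => exact ha
    | succ k ih => exact hP k (s k) ih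
  exact ⟨s, rfl, fun n => ⟨hs n, hR n (s n) (hs n)⟩⟩

section LimitFunctionals

variable {ι E : Type*} [NormedAddCommGroup E] [NormedSpace ℝ E]

/-- The functionals lying pointwise between the lower and the upper limit of `f` along `F`. By
linearity it is enough to bound them by the upper limit. -/
def limitFunctionals (F : Filter ι) (f : ι → StrongDual ℝ E) : Set (StrongDual ℝ E) :=
  {w | ∀ x c, (∀ᶠ n in F, f n x ≤ c) → w x ≤ c}

theorem le_apply_of_mem_limitFunctionals {F : Filter ι} {f : ι → StrongDual ℝ E}
    {w : StrongDual ℝ E} (hw : w ∈ limitFunctionals F f) {x : E} {c : ℝ}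
    (h : ∀ᶠ n in F, c ≤ f n x) : c ≤ w x := by
  have := hw (-x) (-c) (h.mono fun n hn => by simpa using hn)
  simpa using this

theorem limitFunctionals_mono {F G : Filter ι} (h : G ≤ F) (f : ι → StrongDual ℝ E) :
    limitFunctionals G f ⊆ limitFunctionals F f :=
  fun _ hw x c hc => hw x c (h hc)

theorem limitFunctionals_comp_subset {κ : Type*} {F : Filter ι} {G : Filter κ} {φ : κ → ι}
    (hφ : Tendsto φ G F) (f : ι → StrongDual ℝ E) :
    limitFunctionals G (f ∘ φ) ⊆ limitFunctionals F f :=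
  fun _ hw x c hc => hw x c (hφ.eventually hc)

theorem apply_le_norm_of_norm_le_one {f : StrongDual ℝ E} (hf : ‖f‖ ≤ 1) (x : E) :
    f x ≤ ‖x‖ :=
  (le_abs_self _).trans ((f.le_opNorm x).trans (mul_le_of_le_one_left (norm_nonneg x) hf))

theorem norm_le_one_of_mem_limitFunctionals {F : Filter ι} {f : ι → StrongDual ℝ E}
    (hf : ∀ n, ‖f n‖ ≤ 1) {w : StrongDual ℝ E} (hw : w ∈ limitFunctionals F f) : ‖w‖ ≤ 1 := by
  refine w.opNorm_le_bound zero_le_one fun x => ?_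
  have h (y : E) : w y ≤ ‖y‖ :=
    hw y _ (Eventually.of_forall fun n => apply_le_norm_of_norm_le_one (hf n) y)
  have h' := h (-x)
  rw [map_neg, norm_neg] at h'
  rw [one_mul, Real.norm_eq_abs]
  exact abs_le.2 ⟨by linarith, h x⟩

/-- A weak-star cluster point of a bounded family is one of its limit functionals. -/
theorem limitFunctionals_nonempty (F : Filter ι) [F.NeBot] {f : ι → StrongDual ℝ E}
    (hf : ∀ n, ‖f n‖ ≤ 1) : (limitFunctionals F f).Nonempty := by
  let U := Ultrafilter.of F
  obtain ⟨w, -, hw⟩ := (WeakDual.isCompact_closedBall (𝕜 := ℝ) (0 : StrongDual ℝ E) 1)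
    |>.ultrafilter_le_nhds (U.map fun n => StrongDual.toWeakDual (f n)) (by
      rw [le_principal_iff, Ultrafilter.coe_map, mem_map]
      exact Eventually.of_forall fun n => by simpa using hf n)
  refine ⟨WeakDual.toStrongDual w, fun x c hc => ?_⟩
  have hlim : Tendsto (fun n => f n x) U (𝓝 (w x)) :=
    ((WeakDual.eval_continuous x).tendsto w).comp (show Tendsto _ (U : Filter ι) (𝓝 w) from hw)
  exact le_of_tendsto hlim (Ultrafilter.of_le F hc)

/-- Restricting the filter, the distance from a given functional to the limit functionals can be
made constant up to `ε`. -/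
theorem exists_inf_principal_norm_sub_le (F : Filter ι) [F.NeBot] {f : ι → StrongDual ℝ E}
    (hf : ∀ n, ‖f n‖ ≤ 1) (h : StrongDual ℝ E) {ε : ℝ} (hε : 0 < ε) :
    ∃ A : Set ι, (F ⊓ 𝓟 A).NeBot ∧ ∀ w ∈ limitFunctionals (F ⊓ 𝓟 A) f,
      ∀ w' ∈ limitFunctionals (F ⊓ 𝓟 A) f, ‖h - w‖ ≤ ‖h - w'‖ + ε := by
  let N : Set ℝ := (fun w => ‖h - w‖) '' limitFunctionals F f
  have hN : N.Nonempty := (limitFunctionals_nonempty F hf).image _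
  have hb : BddAbove N := by
    refine ⟨‖h‖ + 1, ?_⟩
    rintro _ ⟨w, hw, rfl⟩
    exact (norm_sub_le _ _).trans
      (by gcongr; exact norm_le_one_of_mem_limitFunctionals hf hw)
  obtain ⟨_, ⟨v, hv, rfl⟩, hvN⟩ := exists_lt_of_lt_csSup hN (sub_lt_self (sSup N) (half_pos hε))
  have hvN' : sSup N - ε / 2 < ‖h - v‖ := hvN
  obtain ⟨y, hy1, hy⟩ := ContinuousLinearMap.exists_lt_apply_of_lt_opNorm (h - v) hvN'
  obtain ⟨x, hx1, hx⟩ : ∃ x : E, ‖x‖ ≤ 1 ∧ sSup N - ε / 2 < (h - v) x := by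
    rw [Real.norm_eq_abs] at hy
    rcases abs_cases ((h - v) y) with hc | hc
    · exact ⟨y, hy1.le, hc.1 ▸ hy⟩
    · exact ⟨-y, by simpa using hy1.le, by rw [map_neg]; exact hc.1 ▸ hy⟩
  let A : Set ι := {n | f n x ≤ v x + ε / 2}
  refine ⟨A, ?_, fun w hw w' hw' => ?_⟩
  · rw [← frequently_mem_iff_neBot]
    intro hA
    have := le_apply_of_mem_limitFunctionals hv (hA.mono fun n hn => (not_le.1 hn).le)
    linarith
  · have h1 : ‖h - w‖ ≤ sSup N :=
      le_csSup hb ⟨w, limitFunctionals_mono inf_le_left f hw, rfl⟩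
    have h2 : w' x ≤ v x + ε / 2 := hw' x _ (mem_inf_of_right (mem_principal_self A))
    have h3 : (h - w') x ≤ ‖h - w'‖ :=
      (le_abs_self _).trans ((h - w').unit_le_opNorm x hx1)
    simp only [sub_apply] at hx h3
    linarith

/-- Every bounded sequence of functionals has a subsequence whose limit functionals are all at the
same distance from any given element of the span of the sequence. -/
theorem exists_subseq_norm_sub_eq {f : ℕ → StrongDual ℝ E} (hf : ∀ n, ‖f n‖ ≤ 1) :
    ∃ φ : ℕ → ℕ, Tendsto φ atTop atTop ∧ ∀ h ∈ Submodule.span ℝ (Set.range f),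
      ∀ w ∈ limitFunctionals atTop (f ∘ φ), ∀ w' ∈ limitFunctionals atTop (f ∘ φ),
        ‖h - w‖ = ‖h - w'‖ := by
  obtain ⟨D, hDc, hD⟩ :=
    ((Set.countable_range f).isSeparable.span (R := ℝ) : TopologicalSpace.IsSeparable _)
  have hDne : D.Nonempty := closure_nonempty_iff.1 ⟨0, hD (Submodule.zero_mem _)⟩
  obtain ⟨d, rfl⟩ := hDc.exists_eq_range hDne
  let ε : ℕ → ℝ := fun n => 1 / ((n : ℝ) + 1)
  obtain ⟨F, hF0, hF⟩ := exists_seq_of_forall_exists_succ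
    (fun _ (F : Filter ℕ) => F.NeBot ∧ F.IsCountablyGenerated)
    (fun n F G => G ≤ F ∧ ∀ w ∈ limitFunctionals G f, ∀ w' ∈ limitFunctionals G f,
      ‖d n.unpair.1 - w‖ ≤ ‖d n.unpair.1 - w'‖ + ε n.unpair.2)
    atTop ⟨inferInstance, inferInstance⟩ (by
      rintro n F ⟨hF1, hF2⟩
      obtain ⟨A, hA, hA'⟩ := exists_inf_principal_norm_sub_le F hf (d n.unpair.1)
        (Nat.one_div_pos_of_nat (α := ℝ) (n := n.unpair.2))
      exact ⟨F ⊓ 𝓟 A, ⟨hA, inferInstance⟩, inf_le_left, hA'⟩)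
  have hanti : Antitone F := antitone_nat_of_succ_le fun n => (hF n).2.1
  have hcg (n : ℕ) : (F n).IsCountablyGenerated := (hF n).1.2
  have hne : (⨅ n, F n).NeBot :=
    iInf_neBot_of_directed' hanti.directed_ge fun n => (hF n).1.1
  obtain ⟨φ, hφ⟩ := exists_seq_tendsto (⨅ n, F n)
  have hφF (n : ℕ) : Tendsto φ atTop (F n) := hφ.mono_right (iInf_le F n)
  have key : ∀ w ∈ limitFunctionals atTop (f ∘ φ), ∀ w' ∈ limitFunctionals atTop (f ∘ φ),
      ∀ h ∈ Submodule.span ℝ (Set.range f), ‖h - w‖ ≤ ‖h - w'‖ := by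
    intro w hw w' hw' h hh
    have hclosed : IsClosed {h : StrongDual ℝ E | ‖h - w‖ ≤ ‖h - w'‖} :=
      isClosed_le (by fun_prop) (by fun_prop)
    refine closure_minimal ?_ hclosed (hD hh)
    rintro _ ⟨i, rfl⟩
    have hij (j : ℕ) : ‖d i - w‖ ≤ ‖d i - w'‖ + ε j := by
      have := (hF (Nat.pair i j)).2.2 w (limitFunctionals_comp_subset (hφF _) f hw)
        w' (limitFunctionals_comp_subset (hφF _) f hw')
      simpa using this
    have hlim : Tendsto (fun j => ‖d i - w'‖ + ε j) atTop (𝓝 (‖d i - w'‖ + 0)) :=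
      tendsto_const_nhds.add tendsto_one_div_add_atTop_nhds_zero_nat
    rw [add_zero] at hlim
    exact ge_of_tendsto' hlim hij
  exact ⟨φ, hF0 ▸ hφF 0, fun h hh w hw w' hw' =>
    le_antisymm (key w hw w' hw' h hh) (key w' hw' w hw h hh)⟩

/-- Convex blocks of a sequence have no new limit functionals. -/
theorem limitFunctionals_convexHull_subset {f g : ℕ → StrongDual ℝ E}
    (hg : ∀ n, g n ∈ convexHull ℝ (f '' Set.Ici n)) :
    limitFunctionals atTop g ⊆ limitFunctionals atTop f := by
  intro w hw x c hc
  obtain ⟨N, hN⟩ := eventually_atTop.1 hc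
  refine hw x c (eventually_atTop.2 ⟨N, fun n hn => ?_⟩)
  have hconv : Convex ℝ {h : StrongDual ℝ E | h x ≤ c} :=
    convex_halfSpace_le ⟨fun _ _ => rfl, fun _ _ => rfl⟩ c
  refine convexHull_min ?_ hconv (hg n)
  rintro _ ⟨k, hk, rfl⟩
  exact hN k (hn.trans hk)

end LimitFunctionals

section DoubleDual

variable {E : Type*} [NormedAddCommGroup E] [NormedSpace ℝ E]

/-- A finite form of Goldstine's theorem. -/
theorem exists_norm_le_one_forall_lt_apply {Φ : StrongDual ℝ (StrongDual ℝ E)} (hΦ : ‖Φ‖ ≤ 1)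
    {θ : ℝ} (s : Finset (StrongDual ℝ E)) (hs : ∀ f ∈ s, θ < Φ f) :
    ∃ x : E, ‖x‖ ≤ 1 ∧ ∀ f ∈ s, θ < f x := by
  classical
  let T : E →L[ℝ] (s → ℝ) := ContinuousLinearMap.pi fun f => (f : StrongDual ℝ E)
  let a : s → ℝ := fun f => Φ f
  have ha : a ∈ closure (T '' Metric.closedBall 0 1) := by
    by_contra hcon
    have hconv : Convex ℝ (closure (T '' Metric.closedBall 0 1)) :=
      ((convex_closedBall (0 : E) 1).linear_image T.toLinearMap).closure
    obtain ⟨φ, c, hφ, hc⟩ := geometric_hahn_banach_closed_point hconv isClosed_closure hcon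
    have hφ_apply (t : s → ℝ) : φ t = ∑ f, t f * φ (Pi.single f 1) := by
      conv_lhs => rw [pi_eq_sum_univ' t]
      simp [map_sum]
    have hΦφ : Φ (φ.comp T) = φ a := by
      have : φ.comp T = ∑ f : s, φ (Pi.single f 1) • (f : StrongDual ℝ E) := by
        ext x
        rw [ContinuousLinearMap.comp_apply, hφ_apply]
        simp [T, mul_comm]
      rw [this, hφ_apply a]
      simp [a, mul_comm]
    have hx (x : E) (hx : ‖x‖ ≤ 1) : φ (T x) < c :=
      hφ _ (subset_closure ⟨x, by simpa using hx, rfl⟩)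
    have hc0 : 0 ≤ c := by simpa using (hx 0 (by simp)).le
    have hnorm : ‖φ.comp T‖ ≤ c := by
      refine ContinuousLinearMap.opNorm_le_of_unit_norm hc0 fun x hx1 => ?_
      have h1 := hx x hx1.le
      have h2 := hx (-x) (by simpa using hx1.le)
      simp only [map_neg] at h2
      rw [Real.norm_eq_abs]
      exact abs_le.2 ⟨by simpa using by linarith, h1.le⟩
    have := apply_le_norm_of_norm_le_one hΦ (φ.comp T)
    linarith
  have hopen : IsOpen {t : s → ℝ | ∀ f, θ < t f} := by
    simp only [Set.ofPred_forall]
    exact isOpen_iInter_of_finite fun f => isOpen_lt continuous_const (continuous_apply f)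
  obtain ⟨_, ht, x, hx, rfl⟩ := mem_closure_iff.1 ha _ hopen fun f => hs f f.2
  exact ⟨x, by simpa using hx, fun f hf => ht ⟨f, hf⟩⟩

/-- A functional at distance more than `θ` from the span of finitely many functionals has norm more
than `θ` on their common kernel. -/
theorem exists_norm_le_one_lt_apply_of_lt_norm_sub {ι G : Type*} [Finite ι]
    [NormedAddCommGroup G] [NormedSpace ℝ G] {Φ : StrongDual ℝ G} {L : ι → StrongDual ℝ G}
    {θ : ℝ} (h : ∀ Ψ ∈ Submodule.span ℝ (Set.range L), θ < ‖Φ - Ψ‖) :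
    ∃ g : G, ‖g‖ ≤ 1 ∧ θ < Φ g ∧ ∀ i, L i g = 0 := by
  have := Fintype.ofFinite ι
  let p : Submodule ℝ G := ⨅ i, LinearMap.ker (L i).toLinearMap
  have hp {g : G} (hg : g ∈ p) (i : ι) : L i g = 0 := by
    simp only [p, Submodule.mem_iInf] at hg
    exact hg i
  obtain ⟨Ψ, hΨ, hΨn⟩ := exists_extension_norm_eq p (Φ.comp p.subtypeL)
  have hker : (Φ - Ψ).toLinearMap ∈
      Submodule.span ℝ (Set.range fun i => (L i).toLinearMap) := by
    refine mem_span_of_iInf_ker_le_ker fun g hg => ?_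
    simpa [sub_eq_zero] using (hΨ ⟨g, hg⟩).symm
  have hspan : Φ - Ψ ∈ Submodule.span ℝ (Set.range L) := by
    obtain ⟨c, hc⟩ := (Submodule.mem_span_range_iff_exists_fun ℝ).1 hker
    refine (Submodule.mem_span_range_iff_exists_fun ℝ).2 ⟨c, ?_⟩
    ext g
    simpa using LinearMap.congr_fun hc g
  have hlt : θ < ‖Φ.comp p.subtypeL‖ := by
    rw [← hΨn]
    simpa using h _ hspan
  obtain ⟨g, hg1, hg⟩ := ContinuousLinearMap.exists_lt_apply_of_lt_opNorm _ hlt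
  have hg1' : ‖(g : G)‖ ≤ 1 := hg1.le
  have hlt_abs : θ < |Φ g| := hg
  rcases abs_cases (Φ (g : G)) with hc | hc
  · exact ⟨g, hg1', hc.1 ▸ hlt_abs, hp g.2⟩
  · refine ⟨-g, by simpa using hg1', ?_, fun i => by simp [hp g.2 i]⟩
    rw [map_neg]
    exact hc.1 ▸ hlt_abs

/-- If an element of the bidual is at distance more than `θ` from `E`, then its norm on the
annihilator of any finite subset of `E` is more than `θ`. -/
theorem exists_norm_le_one_forall_apply_eq_zero {Φ : StrongDual ℝ (StrongDual ℝ E)} {θ : ℝ}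
    (hΦ : ∀ x : E, θ < ‖Φ - NormedSpace.inclusionInDoubleDual ℝ E x‖) (s : Finset E) :
    ∃ f : StrongDual ℝ E, ‖f‖ ≤ 1 ∧ θ < Φ f ∧ ∀ x ∈ s, f x = 0 := by
  let J := NormedSpace.inclusionInDoubleDual ℝ E
  obtain ⟨f, hf1, hf, hf0⟩ := exists_norm_le_one_lt_apply_of_lt_norm_sub
    (Φ := Φ) (L := fun x : s => J x) (θ := θ) (by
      intro Ψ hΨ
      obtain ⟨c, rfl⟩ := (Submodule.mem_span_range_iff_exists_fun ℝ).1 hΨ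
      simpa [J] using hΦ (∑ i, c i • (i : E)))
  exact ⟨f, hf1, hf, fun x hx => hf0 ⟨x, hx⟩⟩

/-- The range of a nonsurjective isometry of a Banach space stays away from some point of the unit
ball. -/
theorem exists_norm_le_one_forall_lt_norm_sub {V G : Type*} [NormedAddCommGroup V]
    [NormedSpace ℝ V] [CompleteSpace V] [NormedAddCommGroup G] [NormedSpace ℝ G] (J : V →ₗᵢ[ℝ] G)
    (hJ : ¬ Function.Surjective J) :
    ∃ g : G, ‖g‖ ≤ 1 ∧ ∃ θ : ℝ, 0 < θ ∧ ∀ x, θ < ‖g - J x‖ := by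
  obtain ⟨g₀, hg₀⟩ := not_forall.1 hJ
  have hpos : 0 < ‖g₀‖ := norm_pos_iff.2 fun h => hg₀ ⟨0, by simp [h]⟩
  have hg : ‖g₀‖⁻¹ • g₀ ∉ Set.range J := by
    rintro ⟨x, hx⟩
    exact hg₀ ⟨‖g₀‖ • x, by rw [map_smul, hx, smul_inv_smul₀ hpos.ne']⟩
  have hdist := (J.isometry.isClosedEmbedding.isClosed_range.notMem_iff_infDist_pos
    (Set.range_nonempty J)).1 hg
  refine ⟨‖g₀‖⁻¹ • g₀, by simp [norm_smul, hpos.ne'], _, half_pos hdist, fun x => ?_⟩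
  rw [← dist_eq_norm]
  exact (half_lt_self hdist).trans_le (Metric.infDist_le_dist_of_mem ⟨x, rfl⟩)

/-- A nonreflexive Banach space contains a triangular array of vectors and functionals. -/
theorem exists_seq_of_not_surjective_inclusionInDoubleDual [CompleteSpace E]
    (hE : ¬ Function.Surjective (NormedSpace.inclusionInDoubleDual ℝ E)) :
    ∃ θ : ℝ, 0 < θ ∧ ∃ (f : ℕ → StrongDual ℝ E) (x : ℕ → E), (∀ n, ‖f n‖ ≤ 1) ∧
      (∀ n, ‖x n‖ ≤ 1) ∧ (∀ k, ∀ᶠ n in atTop, f n (x k) = 0) ∧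
      ∀ n, ∀ᶠ k in atTop, θ ≤ f n (x k) := by
  obtain ⟨Φ, hΦ1, θ, hθ, hΦ⟩ :=
    exists_norm_le_one_forall_lt_norm_sub (G := StrongDual ℝ (StrongDual ℝ E))
      (NormedSpace.inclusionInDoubleDualLi ℝ) hE
  obtain ⟨u, hu, hur⟩ := exists_seq_of_forall_finset_exists
    (fun q : StrongDual ℝ E × E => ‖q.1‖ ≤ 1 ∧ ‖q.2‖ ≤ 1 ∧ θ < Φ q.1)
    (fun q q' => q'.1 q.2 = 0 ∧ θ < q.1 q'.2) (by
      classical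
      intro s hs
      obtain ⟨f, hf1, hf, hf0⟩ :=
        exists_norm_le_one_forall_apply_eq_zero hΦ (s.image Prod.snd)
      obtain ⟨x, hx1, hx⟩ := exists_norm_le_one_forall_lt_apply hΦ1 (θ := θ) (s.image Prod.fst)
        (by
          intro g hg
          obtain ⟨q, hq, rfl⟩ := Finset.mem_image.1 hg
          exact (hs q hq).2.2)
      exact ⟨(f, x), ⟨hf1, hx1, hf⟩, fun q hq =>
        ⟨hf0 _ (Finset.mem_image_of_mem _ hq), hx _ (Finset.mem_image_of_mem _ hq)⟩⟩)
  exact ⟨θ, hθ, fun n => (u n).1, fun n => (u n).2, fun n => (hu n).1, fun n => (hu n).2.1,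
    fun k => (eventually_gt_atTop k).mono fun n hn => (hur k n hn).1,
    fun n => (eventually_gt_atTop n).mono fun k hk => (hur n k hk).2.le⟩

end DoubleDual

/-- The inductive step in the construction of a functional that does not attain its norm: adding a
suitable multiple of a vector of `K` keeps the norm growing at rate `ρ`. -/
theorem exists_mem_forall_le_norm_add_smul {V : Type*} [NormedAddCommGroup V] [NormedSpace ℝ V]
    {K : Set V} (hK : Convex ℝ K) (hne : K.Nonempty) {u : V} {β β' ρ δ : ℝ} (hβ : 0 < β)
    (hβ' : 0 < β') (hδ : 0 < δ) (h : ∀ a ∈ K, β * ρ + ‖u‖ + δ ≤ ‖u + β • a‖) :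
    ∃ b ∈ K, ∃ δ' > 0, ∀ a ∈ K, β' * ρ + ‖u + β • b‖ + δ' ≤ ‖u + β • b + β' • a‖ := by
  let N : Set ℝ := (fun a => ‖u + β • a‖) '' K
  have hN : N.Nonempty := hne.image _
  have hlow : β * ρ + ‖u‖ + δ ≤ sInf N := by
    refine le_csInf hN ?_
    rintro _ ⟨a, ha, rfl⟩
    exact h a ha
  have hbdd : BddBelow N := by
    refine ⟨0, ?_⟩
    rintro _ ⟨a, -, rfl⟩
    exact norm_nonneg _
  have hδ' : 0 < β' * δ / (2 * β) := by positivity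
  obtain ⟨_, ⟨b, hb, rfl⟩, hbN⟩ := exists_lt_of_csInf_lt hN (lt_add_of_pos_right (sInf N) hδ')
  refine ⟨b, hb, β' * δ / (2 * β), hδ', fun a ha => ?_⟩
  have hsum : 0 < β + β' := add_pos hβ hβ'
  have hc : (β / (β + β')) • b + (β' / (β + β')) • a ∈ K :=
    hK hb ha (by positivity) (by positivity) (by field_simp)
  have hm : sInf N ≤ ‖u + β • ((β / (β + β')) • b + (β' / (β + β')) • a)‖ :=
    csInf_le hbdd ⟨_, hc, rfl⟩
  have heq : u + β • ((β / (β + β')) • b + (β' / (β + β')) • a) =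
      (β / (β + β')) • (u + β • b + β' • a) + (β' / (β + β')) • u := by
    have hu : (β / (β + β')) • u + (β' / (β + β')) • u = u := by
      rw [← add_smul, ← add_div, div_self hsum.ne', one_smul]
    nth_rw 1 [← hu]
    module
  have hle : sInf N ≤ β / (β + β') * ‖u + β • b + β' • a‖ + β' / (β + β') * ‖u‖ := by
    refine hm.trans ?_
    rw [heq]
    refine (norm_add_le _ _).trans_eq ?_
    rw [norm_smul, norm_smul, Real.norm_of_nonneg (by positivity),
      Real.norm_of_nonneg (by positivity)]
  have hle' : (β + β') * sInf N ≤ β * ‖u + β • b + β' • a‖ + β' * ‖u‖ := by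
    have := mul_le_mul_of_nonneg_left hle hsum.le
    field_simp at this
    linarith
  have hb' : β * ‖u + β • b‖ ≤ β * sInf N + β' * δ / 2 := by
    have := mul_le_mul_of_nonneg_left hbN.le hβ.le
    field_simp at this ⊢
    linarith
  have hlow' := mul_le_mul_of_nonneg_left hlow hβ'.le
  refine le_of_mul_le_mul_left ?_ hβ
  have : β * (β' * δ / (2 * β)) = β' * δ / 2 := by field_simp
  rw [mul_add, mul_add, this]
  linarith

/-- Given functionals whose convex hull stays away from `w`, there are convex blocks whose weighted
partial sums, translated by `w`, grow in norm at a definite rate. -/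
theorem exists_seq_mem_convexHull_norm_growth {V : Type*} [NormedAddCommGroup V]
    [NormedSpace ℝ V] {f : ℕ → V} {w : V} {β : ℕ → ℝ} (hβ : ∀ n, 0 < β n) {ρ θ : ℝ} (hρ : ρ < θ)
    (hθ : ∀ a ∈ convexHull ℝ (Set.range f), θ ≤ ‖a - w‖) :
    ∃ g : ℕ → V, (∀ n, g n ∈ convexHull ℝ (f '' Set.Ici n)) ∧ ∀ n,
      β n * ρ + ‖∑ i ∈ Finset.range n, β i • (g i - w)‖ ≤
        ‖∑ i ∈ Finset.range (n + 1), β i • (g i - w)‖ := by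
  let K : ℕ → Set V := fun n => (fun a => a - w) '' convexHull ℝ (f '' Set.Ici n)
  have hK (n : ℕ) : Convex ℝ (K n) := by
    simpa [K, sub_eq_add_neg, add_comm] using (convex_convexHull ℝ (f '' Set.Ici n)).translate (-w)
  have hne (n : ℕ) : (K n).Nonempty :=
    ⟨_, f n, subset_convexHull ℝ _ ⟨n, Set.self_mem_Ici, rfl⟩, rfl⟩
  have hmono (n : ℕ) : K (n + 1) ⊆ K n :=
    Set.image_mono (convexHull_mono (Set.image_mono (Set.Ici_subset_Ici.2 n.le_succ)))
  obtain ⟨s, hs0, hs⟩ := exists_seq_of_forall_exists_succ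
    (fun n u => ∃ δ > 0, ∀ a ∈ K n, β n * ρ + ‖u‖ + δ ≤ ‖u + β n • a‖)
    (fun n u u' => ∃ b ∈ K n, u' = u + β n • b) (0 : V) (by
      refine ⟨β 0 * (θ - ρ), mul_pos (hβ 0) (sub_pos.2 hρ), ?_⟩
      rintro _ ⟨a, ha, rfl⟩
      have := hθ a (convexHull_mono (Set.image_subset_range _ _) ha)
      rw [norm_zero, zero_add, norm_smul, Real.norm_of_nonneg (hβ 0).le]
      nlinarith [hβ 0])
    (by
      rintro n u ⟨δ, hδ, h⟩
      obtain ⟨b, hb, δ', hδ', hb'⟩ := exists_mem_forall_le_norm_add_smul (hK n) (hne n) (hβ n)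
        (hβ (n + 1)) hδ h
      exact ⟨u + β n • b, ⟨δ', hδ', fun a ha => hb' a (hmono n ha)⟩, b, hb, rfl⟩)
  have hg (n : ℕ) : ∃ g ∈ convexHull ℝ (f '' Set.Ici n), s (n + 1) = s n + β n • (g - w) := by
    obtain ⟨_, ⟨g, hg, rfl⟩, h⟩ := (hs n).2
    exact ⟨g, hg, h⟩
  choose g hgm hgs using hg
  have hsum (n : ℕ) : ∑ i ∈ Finset.range n, β i • (g i - w) = s n := by
    induction n with
    | zero => simp [hs0]
    | succ n ih => rw [Finset.sum_range_succ, ih, hgs]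
  refine ⟨g, hgm, fun n => ?_⟩
  obtain ⟨δ, hδ, h⟩ := (hs n).1
  have := h _ ⟨g n, hgm n, rfl⟩
  rw [hsum, hsum, hgs]
  linarith

/-- If `w` and `w'` are equidistant from every point of `p`, translating by either of them gives
weighted sums of elements of `p` the same norm. -/
theorem norm_sum_smul_sub_eq {V : Type*} [NormedAddCommGroup V] [NormedSpace ℝ V]
    {p : Submodule ℝ V} {w w' : V} (h : ∀ v ∈ p, ‖v - w‖ = ‖v - w'‖) {g : ℕ → V}
    (hg : ∀ n, g n ∈ p) {β : ℕ → ℝ} (hβ : ∀ n, 0 < β n) (n : ℕ) :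
    ‖∑ i ∈ Finset.range n, β i • (g i - w)‖ = ‖∑ i ∈ Finset.range n, β i • (g i - w')‖ := by
  rcases n.eq_zero_or_pos with rfl | hn
  · simp
  let c := ∑ i ∈ Finset.range n, β i
  have hc : 0 < c :=
    Finset.sum_pos (fun i _ => hβ i) (Finset.nonempty_range_iff.2 hn.ne')
  let v := c⁻¹ • ∑ i ∈ Finset.range n, β i • g i
  have hv : v ∈ p := p.smul_mem _ (p.sum_mem fun i _ => p.smul_mem _ (hg i))
  have key (y : V) : ∑ i ∈ Finset.range n, β i • (g i - y) = c • (v - y) := by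
    simp only [smul_sub, Finset.sum_sub_distrib, v, smul_inv_smul₀ hc.ne', c, Finset.sum_smul]
  rw [key, key, norm_smul, norm_smul, h v hv]

/-- **James' theorem**: a real Banach space on which every functional attains its norm is
reflexive. -/
theorem surjective_inclusionInDoubleDual_of_forall_attains {E : Type*} [NormedAddCommGroup E]
    [NormedSpace ℝ E] [CompleteSpace E]
    (hE : ∀ g : StrongDual ℝ E, ∃ x : E, ‖x‖ ≤ 1 ∧ g x = ‖g‖) :
    Function.Surjective (NormedSpace.inclusionInDoubleDual ℝ E) := by
  by_contra hsurj
  obtain ⟨θ, hθ, f₀, x, hf₀, hx, hfx₀, hfx₀'⟩ :=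
    exists_seq_of_not_surjective_inclusionInDoubleDual hsurj
  obtain ⟨φ, hφ, hφL⟩ := exists_subseq_norm_sub_eq hf₀
  let f := f₀ ∘ φ
  have hf (n : ℕ) : ‖f n‖ ≤ 1 := hf₀ (φ n)
  let p := Submodule.span ℝ (Set.range f₀)
  have hfp (s : Set ℕ) : convexHull ℝ (f '' s) ⊆ p := by
    refine convexHull_min ?_ p.convex
    rintro _ ⟨n, -, rfl⟩
    exact Submodule.subset_span ⟨φ n, rfl⟩
  obtain ⟨w, hw⟩ := limitFunctionals_nonempty atTop hf
  have hdist : ∀ a ∈ convexHull ℝ (Set.range f), θ ≤ ‖a - w‖ := by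
    intro a ha
    have hconv : Convex ℝ {a : StrongDual ℝ E | ∀ᶠ k in atTop, θ ≤ a (x k)} := by
      intro a ha b hb s t hs ht hst
      filter_upwards [ha, hb] with k hak hbk
      have h1 := mul_le_mul_of_nonneg_left hak hs
      have h2 := mul_le_mul_of_nonneg_left hbk ht
      simp only [add_apply, smul_apply, smul_eq_mul]
      calc θ = s * θ + t * θ := by rw [← add_mul, hst, one_mul]
        _ ≤ _ := add_le_add h1 h2
    have ha' : ∀ᶠ k in atTop, θ ≤ a (x k) := by
      refine convexHull_min ?_ hconv ha
      rintro _ ⟨n, rfl⟩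
      exact hfx₀' (φ n)
    obtain ⟨k, hk⟩ := ha'.exists
    have hwk : w (x k) ≤ 0 := hw _ _ ((hφ.eventually (hfx₀ k)).mono fun n hn => hn.le)
    have h3 : (a - w) (x k) ≤ ‖a - w‖ :=
      (le_abs_self _).trans ((a - w).unit_le_opNorm _ (hx k))
    rw [sub_apply] at h3
    linarith
  let r := θ / (θ + 16)
  have hr0 : 0 < r := by positivity
  have hr1 : r < 1 := (div_lt_one (by positivity)).2 (by linarith)
  have hr : r / (1 - r) = θ / 16 := by
    have : 1 - r = 16 / (θ + 16) := by simp only [r]; field_simp; ring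
    rw [this]
    simp only [r]
    field_simp
  obtain ⟨g, hgm, hgrow⟩ := exists_seq_mem_convexHull_norm_growth (β := fun n => r ^ n)
    (fun n => pow_pos hr0 n) (half_lt_self hθ) hdist
  have hg1 (n : ℕ) : ‖g n‖ ≤ 1 := by
    have : convexHull ℝ (f '' Set.Ici n) ⊆ Metric.closedBall 0 1 := by
      refine convexHull_min ?_ (convex_closedBall _ _)
      rintro _ ⟨k, -, rfl⟩
      simpa using hf k
    simpa using this (hgm n)
  obtain ⟨v, hv⟩ := limitFunctionals_nonempty atTop hg1
  have hv1 : ‖v‖ ≤ 1 := norm_le_one_of_mem_limitFunctionals hg1 hv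
  have hswap := norm_sum_smul_sub_eq (p := p) (β := fun n => r ^ n)
    (fun h hh => hφL h hh w hw v (limitFunctionals_convexHull_subset hgm hv))
    (fun n => hfp _ (hgm n)) (fun n => pow_pos hr0 n)
  let S : ℕ → StrongDual ℝ E := fun n => ∑ i ∈ Finset.range n, r ^ i • (g i - v)
  have hS (n : ℕ) : r ^ n * (θ / 2) + ‖S n‖ ≤ ‖S (n + 1)‖ := by
    simpa only [S, hswap] using hgrow n
  have hbound (n : ℕ) : ‖r ^ n • (g n - v)‖ ≤ 2 * r ^ n := by
    have : ‖g n - v‖ ≤ 2 := (norm_sub_le _ _).trans (by linarith [hg1 n])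
    rw [norm_smul, Real.norm_of_nonneg (by positivity), mul_comm]
    gcongr
  have hsummable : Summable fun n => r ^ n • (g n - v) :=
    Summable.of_norm_bounded ((summable_geometric_of_lt_one hr0.le hr1).mul_left 2) hbound
  obtain ⟨z, hz⟩ := hsummable
  obtain ⟨y, hy1, hy⟩ := hE z
  have htail (n : ℕ) : ‖S (n + 1) - z‖ ≤ r ^ n * (θ / 8) := by
    refine (norm_sub_le_of_geometric_bound_of_hasSum hr1 hbound hz (n + 1)).trans_eq ?_
    rw [pow_succ, mul_div_assoc, mul_div_assoc, hr]
    ring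
  have hgv (n : ℕ) : v y + θ / 4 ≤ g n y := by
    have h1 : (z - S (n + 1)) y ≤ r ^ n * (θ / 8) := by
      have h := htail n
      rw [norm_sub_rev] at h
      exact (le_abs_self _).trans (((z - S (n + 1)).unit_le_opNorm y hy1).trans h)
    have h2 : S n y ≤ ‖S n‖ := (le_abs_self _).trans ((S n).unit_le_opNorm y hy1)
    have h3 : ‖S (n + 1)‖ - ‖z‖ ≤ r ^ n * (θ / 8) := (norm_sub_norm_le _ _).trans (htail n)
    have h4 : S (n + 1) y = S n y + r ^ n * (g n y - v y) := by
      simp [S, Finset.sum_range_succ]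
    rw [sub_apply, hy, h4] at h1
    have hrn : 0 < r ^ n := pow_pos hr0 n
    have h5 : r ^ n * (θ / 4) ≤ r ^ n * (g n y - v y) := by linarith [hS n]
    linarith [le_of_mul_le_mul_left h5 hrn]
  have := le_apply_of_mem_limitFunctionals hv (Eventually.of_forall hgv)
  linarith

section NormAttaining

variable {𝕜 X : Type*} [RCLike 𝕜] [NormedAddCommGroup X] [NormedSpace 𝕜 X]

/-- **James' theorem** over `ℝ` or `ℂ`. -/
theorem surjective_inclusionInDoubleDual_of_forall_exists_norm_eq [CompleteSpace X]
    (hX : ∀ f : StrongDual 𝕜 X, ∃ x : X, ‖x‖ ≤ 1 ∧ ‖f x‖ = ‖f‖) :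
    Function.Surjective (NormedSpace.inclusionInDoubleDual 𝕜 X) := by
  let _ : NormedSpace ℝ X := NormedSpace.restrictScalars ℝ 𝕜 X
  have : IsScalarTower ℝ 𝕜 X := IsScalarTower.of_algebraMap_smul fun _ _ => rfl
  have hreal : Function.Surjective (NormedSpace.inclusionInDoubleDual ℝ X) := by
    refine surjective_inclusionInDoubleDual_of_forall_attains fun g => ?_
    let f : StrongDual 𝕜 X := g.extendRCLike
    obtain ⟨x, hx, hfx⟩ := hX f
    obtain ⟨c, hc, hcf⟩ := RCLike.exists_norm_eq_mul_self (f x)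
    refine ⟨c • x, by rwa [norm_smul, hc, one_mul], ?_⟩
    rw [← StrongDual.re_extendRCLike_apply (𝕜 := 𝕜) g, map_smul, smul_eq_mul, ← hcf,
      RCLike.ofReal_re, hfx, StrongDual.norm_extendRCLike]
  intro Φ
  let Ψ : StrongDual ℝ (StrongDual ℝ X) :=
    RCLike.reCLM.comp ((Φ.restrictScalars ℝ).comp
      (StrongDual.extendRCLikeL (𝕜 := 𝕜) (F := X) : StrongDual ℝ X →L[ℝ] StrongDual 𝕜 X))
  obtain ⟨x, hx⟩ := hreal Ψ
  refine ⟨x, ?_⟩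
  have hre (f : StrongDual 𝕜 X) : RCLike.re (f x) = RCLike.re (Φ f) := by
    have h := DFunLike.congr_fun hx ((StrongDual.extendRCLikeL (𝕜 := 𝕜) (F := X)).symm f)
    have h' : Ψ ((StrongDual.extendRCLikeL (𝕜 := 𝕜) (F := X)).symm f) = RCLike.re (Φ f) := by
      simp [Ψ]
    rw [h', NormedSpace.dual_def] at h
    exact h
  ext f
  rw [NormedSpace.dual_def]
  refine RCLike.ext (hre f) ?_
  have h := hre ((RCLike.I : 𝕜) • f)
  simp only [smul_apply, map_smul, smul_eq_mul, RCLike.I_mul_re] at h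
  exact neg_injective h

/-- On a reflexive space every functional attains its norm. -/
theorem exists_norm_eq_one_and_norm_apply_eq [Nontrivial X]
    (hX : Function.Surjective (NormedSpace.inclusionInDoubleDual 𝕜 X)) (f : StrongDual 𝕜 X) :
    ∃ x : X, ‖x‖ = 1 ∧ ‖f x‖ = ‖f‖ := by
  obtain ⟨y, hy⟩ := exists_ne (0 : X)
  obtain ⟨h, hh, -⟩ := exists_dual_vector 𝕜 y (norm_ne_zero_iff.2 hy)
  have : Nontrivial (StrongDual 𝕜 X) := ⟨h, 0, fun h0 => by simp [h0] at hh⟩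
  obtain ⟨Φ, hΦ, hΦf⟩ := exists_dual_vector' 𝕜 f
  obtain ⟨x, rfl⟩ := hX Φ
  refine ⟨x, ?_, ?_⟩
  · rw [← hΦ]
    exact ((NormedSpace.inclusionInDoubleDualLi 𝕜).norm_map x).symm
  · rw [NormedSpace.dual_def] at hΦf
    simp [hΦf]

variable {Y : Type*} [NormedAddCommGroup Y] [NormedSpace 𝕜 Y]

/-- Every operator that attains its norm quasi attains it. -/
theorem exists_mem_closure_of_exists_norm_eq {T : X →L[𝕜] Y}
    (hT : ∃ x : X, ‖x‖ = 1 ∧ ‖T x‖ = ‖T‖) :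
    ∃ u ∈ closure (⇑T '' Metric.closedBall 0 1), ‖u‖ = ‖T‖ := by
  obtain ⟨x, hx, hTx⟩ := hT
  exact ⟨T x, subset_closure ⟨x, by simp [hx], rfl⟩, hTx⟩

/-- On a reflexive space, every operator that quasi attains its norm attains it. -/
theorem exists_norm_eq_of_exists_mem_closure [Nontrivial X]
    (hX : Function.Surjective (NormedSpace.inclusionInDoubleDual 𝕜 X)) {T : X →L[𝕜] Y}
    (hT : ∃ u ∈ closure (⇑T '' Metric.closedBall 0 1), ‖u‖ = ‖T‖) :
    ∃ x : X, ‖x‖ = 1 ∧ ‖T x‖ = ‖T‖ := by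
  obtain ⟨u, hu, huT⟩ := hT
  obtain ⟨φ, hφ, hφu⟩ := exists_dual_vector'' 𝕜 u
  obtain ⟨x, hx, hfx⟩ := exists_norm_eq_one_and_norm_apply_eq hX (φ.comp T)
  have hle (y : Y) : ‖φ y‖ ≤ ‖y‖ := φ.le_of_opNorm_le hφ y |>.trans_eq (one_mul _)
  have hmem : u ∈ {y : Y | ‖φ y‖ ≤ ‖φ.comp T‖} := by
    refine closure_minimal ?_ (isClosed_le (by fun_prop) continuous_const) hu
    rintro _ ⟨y, hy, rfl⟩
    exact (φ.comp T).unit_le_opNorm y (by simpa using hy)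
  have hnorm : ‖T‖ ≤ ‖φ.comp T‖ := by
    simpa [hφu, huT] using hmem
  refine ⟨x, hx, le_antisymm (T.unit_le_opNorm x hx.le) ?_⟩
  exact hnorm.trans (hfx.symm.le.trans (hle (T x)))

/-- If every operator into `Y` that quasi attains its norm attains it, then so do all functionals,
since operators of rank one quasi attain their norm. -/
theorem exists_norm_eq_of_forall_operator [Nontrivial Y]
    (h : ∀ T : X →L[𝕜] Y, (∃ u ∈ closure (⇑T '' Metric.closedBall 0 1), ‖u‖ = ‖T‖) →
      ∃ x : X, ‖x‖ = 1 ∧ ‖T x‖ = ‖T‖) (f : StrongDual 𝕜 X) :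
    ∃ x : X, ‖x‖ ≤ 1 ∧ ‖f x‖ = ‖f‖ := by
  obtain ⟨y, hy⟩ := exists_ne (0 : Y)
  have hy' : ‖y‖ ≠ 0 := norm_ne_zero_iff.2 hy
  let T : X →L[𝕜] Y := f.smulRight y
  have hcompact : IsCompact (closure (⇑T '' Metric.closedBall 0 1)) := by
    have hK : IsCompact ((fun c : 𝕜 => c • y) '' Metric.closedBall 0 ‖f‖) :=
      (isCompact_closedBall (0 : 𝕜) ‖f‖).image (by fun_prop)
    refine hK.closure_of_subset ?_
    rintro _ ⟨x, hx, rfl⟩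
    exact ⟨f x, by simpa using f.unit_le_opNorm x (by simpa using hx), rfl⟩
  have hne : (closure (⇑T '' Metric.closedBall 0 1)).Nonempty :=
    ⟨_, subset_closure ⟨0, by simp, rfl⟩⟩
  obtain ⟨u, hu, hmax⟩ := hcompact.exists_isMaxOn hne continuous_norm.continuousOn
  have hu1 : ‖u‖ ≤ ‖T‖ := by
    have : u ∈ {y : Y | ‖y‖ ≤ ‖T‖} := by
      refine closure_minimal ?_ (isClosed_le continuous_norm continuous_const) hu
      rintro _ ⟨x, hx, rfl⟩
      exact T.unit_le_opNorm x (by simpa using hx)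
    exact this
  have hu2 : ‖T‖ ≤ ‖u‖ := by
    refine le_of_forall_lt fun c hc => ?_
    obtain ⟨x, hx1, hx⟩ := T.exists_lt_apply_of_lt_opNorm hc
    exact hx.trans_le (hmax (subset_closure ⟨x, by simpa using hx1.le, rfl⟩))
  obtain ⟨x, hx, hTx⟩ := h T ⟨u, hu, le_antisymm hu1 hu2⟩
  refine ⟨x, hx.le, mul_right_cancel₀ hy' ?_⟩
  rw [← ContinuousLinearMap.norm_smulRight_apply, ← hTx, ← norm_smul]
  rfl

end NormAttaining

/-- for a Banach space `X`, the following are equivalent: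
(a) `X` is reflexive (the canonical embedding into the bidual is surjective);
(b) `NA(X,Y) = QNA(X,Y)` for every Banach space `Y`;
(c) there is a nontrivial Banach space `Y` with `NA(X,Y) = QNA(X,Y)`. -/
theorem reflexive_iff_NA_eq_QNA (𝕜 : Type) [RCLike 𝕜] (X : Type)
    [NormedAddCommGroup X] [NormedSpace 𝕜 X] [CompleteSpace X] [Nontrivial X] :
    (Function.Surjective (NormedSpace.inclusionInDoubleDual 𝕜 X) ↔
      ∀ (Y : Type) [NormedAddCommGroup Y] [NormedSpace 𝕜 Y] [CompleteSpace Y],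
        {T : X →L[𝕜] Y | ∃ x₀ : X, ‖x₀‖ = 1 ∧ ‖T x₀‖ = ‖T‖} =
        {T : X →L[𝕜] Y | ∃ u ∈ closure (⇑T '' Metric.closedBall 0 1), ‖u‖ = ‖T‖}) ∧
    (Function.Surjective (NormedSpace.inclusionInDoubleDual 𝕜 X) ↔
      Nonempty (NAEqQNAWitness 𝕜 X)) := by
  have reflexive_imp (Y : Type) [NormedAddCommGroup Y] [NormedSpace 𝕜 Y]
      (hX : Function.Surjective (NormedSpace.inclusionInDoubleDual 𝕜 X)) :
      {T : X →L[𝕜] Y | ∃ x₀ : X, ‖x₀‖ = 1 ∧ ‖T x₀‖ = ‖T‖} =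
        {T : X →L[𝕜] Y | ∃ u ∈ closure (⇑T '' Metric.closedBall 0 1), ‖u‖ = ‖T‖} :=
    Set.Subset.antisymm (fun _ => exists_mem_closure_of_exists_norm_eq)
      fun _ => exists_norm_eq_of_exists_mem_closure hX
  have imp_reflexive (Y : Type) [NormedAddCommGroup Y] [NormedSpace 𝕜 Y] [Nontrivial Y]
      (hY : {T : X →L[𝕜] Y | ∃ x₀ : X, ‖x₀‖ = 1 ∧ ‖T x₀‖ = ‖T‖} =
        {T : X →L[𝕜] Y | ∃ u ∈ closure (⇑T '' Metric.closedBall 0 1), ‖u‖ = ‖T‖}) :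
      Function.Surjective (NormedSpace.inclusionInDoubleDual 𝕜 X) :=
    surjective_inclusionInDoubleDual_of_forall_exists_norm_eq
      (exists_norm_eq_of_forall_operator fun T hT => hY.symm.subset hT)
  refine ⟨⟨fun hX Y _ _ _ => reflexive_imp Y hX, fun h => imp_reflexive 𝕜 (h 𝕜)⟩,
    fun hX => ⟨{ Y := 𝕜, na_eq_qna := reflexive_imp 𝕜 hX }⟩, ?_⟩
  rintro ⟨W⟩
  let _ := W.instNorm
  let _ := W.instSpace
  have := W.instNontrivial
  exact imp_reflexive W.Y W.na_eq_qna
end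

section
/- Let X be an infinite-dimensional Banach space over 𝕂 (= ℝ or ℂ). Then there exists a bounded linear operator T : X → c₀ which does not quasi attain its norm, i.e., the norm closure of T(B_X) contains no point of norm ‖T‖. -/
open Filter Topology Set

section ConvexTail

variable {E : Type*} [AddCommGroup E] [Module ℝ E]

/-- Each term of `h` is a convex combination of terms of `g` with at least the same index. -/
def IsConvexTail (h g : ℕ → E) : Prop :=
  ∀ k, h k ∈ convexHull ℝ (g '' Ici k)

theorem IsConvexTail.refl (g : ℕ → E) : IsConvexTail g g :=
  fun k => subset_convexHull ℝ _ ⟨k, self_mem_Ici, rfl⟩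

/-- A convex set which contains a tail of `g` contains the same tail of `h`. -/
theorem IsConvexTail.mem_of_convex {h g : ℕ → E} (hg : IsConvexTail h g) {C : Set E}
    (hC : Convex ℝ C) {K : ℕ} (hK : ∀ n ≥ K, g n ∈ C) {n : ℕ} (hn : K ≤ n) : h n ∈ C := by
  refine convexHull_min ?_ hC (hg n)
  rintro _ ⟨i, hi, rfl⟩
  exact hK i (le_trans hn hi)

theorem IsConvexTail.trans {f h g : ℕ → E} (hf : IsConvexTail f h) (hg : IsConvexTail h g) :
    IsConvexTail f g := fun _ =>
  hf.mem_of_convex (convex_convexHull ℝ _)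
    (fun n hn => convexHull_mono (image_mono (Ici_subset_Ici.2 hn)) (hg n)) le_rfl

theorem IsConvexTail.comp (g : ℕ → E) {φ : ℕ → ℕ} (hφ : ∀ k, k ≤ φ k) :
    IsConvexTail (g ∘ φ) g :=
  fun k => subset_convexHull ℝ _ ⟨φ k, hφ k, rfl⟩

theorem IsConvexTail.midpoint (g : ℕ → E) {p q : ℕ → ℕ} (hp : ∀ k, k ≤ p k) (hq : ∀ k, k ≤ q k) :
    IsConvexTail (fun k => (1 / 2 : ℝ) • g (p k) + (1 / 2 : ℝ) • g (q k)) g := fun k =>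
  convex_convexHull ℝ (g '' Ici k) (subset_convexHull ℝ _ (mem_image_of_mem g (hp k)))
    (subset_convexHull ℝ _ (mem_image_of_mem g (hq k))) (by norm_num) (by norm_num) (by norm_num)

/-- The diagonal of a chain of convex tails is eventually a convex tail of every member. -/
theorem diagonal_mem_convexHull {G : ℕ → ℕ → E} (hG : ∀ j, IsConvexTail (G (j + 1)) (G j))
    {j k : ℕ} (hjk : j ≤ k) : G k k ∈ convexHull ℝ (G j '' Ici k) := by
  have key : ∀ i, IsConvexTail (G (j + i)) (G j) := by
    intro i
    induction i with
    | zero => exact IsConvexTail.refl _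
    | succ i ih => exact (hG (j + i)).trans ih
  obtain ⟨i, rfl⟩ := Nat.exists_eq_add_of_le hjk
  exact key i _

end ConvexTail

section Dual

variable {𝕜 X : Type*} [RCLike 𝕜] [NormedAddCommGroup X] [NormedSpace 𝕜 X]

theorem exists_norm_one_dual_vanishing (hX : ¬ FiniteDimensional 𝕜 X) (s : Finset X) :
    ∃ z : StrongDual 𝕜 X, ‖z‖ = 1 ∧ ∀ x ∈ s, z x = 0 := by
  set p := Submodule.span 𝕜 (s : Set X) with hp
  obtain ⟨P, hP⟩ := Submodule.ClosedComplemented.of_finiteDimensional p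
  obtain ⟨x, hx⟩ : ∃ x, x ∉ p := by
    by_contra! hall
    have htop : p = ⊤ := (Submodule.eq_top_iff').2 hall
    exact hX (Module.finite_def.2 ⟨s, htop⟩)
  have hw : x - P x ≠ 0 := fun h0 => hx (by rw [sub_eq_zero.1 h0]; exact (P x).2)
  obtain ⟨f, -, hf⟩ := exists_dual_vector 𝕜 _ (norm_ne_zero_iff.2 hw)
  set g : StrongDual 𝕜 X := f.comp (ContinuousLinearMap.id 𝕜 X - p.subtypeL.comp P) with hg
  have hgx : g x = ‖x - P x‖ := by simpa [hg] using hf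
  have hg0 : g ≠ 0 := by
    intro h0
    rw [h0] at hgx
    exact hw (norm_eq_zero.1 (RCLike.ofReal_eq_zero.1 hgx.symm))
  refine ⟨(‖g‖ : 𝕜)⁻¹ • g, norm_smul_inv_norm hg0, fun y hy => ?_⟩
  have hy' : y ∈ p := Submodule.subset_span hy
  have : P y = ⟨y, hy'⟩ := hP ⟨y, hy'⟩
  simp [hg, this]

theorem exists_finset_norming (s : Finset (StrongDual 𝕜 X)) :
    ∃ t : Finset X, (∀ x ∈ t, ‖x‖ ≤ 1) ∧
      ∀ f ∈ Submodule.span 𝕜 (s : Set (StrongDual 𝕜 X)), ∃ x ∈ t, ‖f‖ ≤ 2 * ‖f x‖ := by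
  classical
  set W := Submodule.span 𝕜 (s : Set (StrongDual 𝕜 X)) with hW
  have : ProperSpace W := FiniteDimensional.proper 𝕜 W
  obtain ⟨t, ht⟩ := (isCompact_sphere (0 : W) 1).elim_finite_subcover
    (fun x : Metric.closedBall (0 : X) 1 => {w : W | 1 / 2 < ‖(w : StrongDual 𝕜 X) x‖})
    (fun x => isOpen_lt continuous_const (by fun_prop)) (by
      intro w hw
      have hw1 : ‖(w : StrongDual 𝕜 X)‖ = 1 := mem_sphere_zero_iff_norm.1 hw
      obtain ⟨x, hx, hwx⟩ := (w : StrongDual 𝕜 X).exists_lt_apply_of_lt_opNorm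
        (r := 1 / 2) (by rw [hw1]; norm_num)
      exact mem_iUnion.2 ⟨⟨x, by simpa using hx.le⟩, hwx⟩)
  refine ⟨insert 0 (t.image Subtype.val), ?_, fun f hf => ?_⟩
  · intro x hx
    rcases Finset.mem_insert.1 hx with rfl | hx
    · simp
    · obtain ⟨y, -, rfl⟩ := Finset.mem_image.1 hx
      exact mem_closedBall_zero_iff.1 y.2
  · by_cases hf0 : f = 0
    · exact ⟨0, Finset.mem_insert_self _ _, by simp [hf0]⟩
    · have hpos : 0 < ‖f‖ := norm_pos_iff.2 hf0
      have hmem : (⟨(‖f‖ : 𝕜)⁻¹ • f, W.smul_mem _ hf⟩ : W) ∈ Metric.sphere (0 : W) 1 :=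
        mem_sphere_zero_iff_norm.2 (norm_smul_inv_norm hf0)
      obtain ⟨x, hxt, hx⟩ := mem_iUnion₂.1 (ht hmem)
      refine ⟨x, Finset.mem_insert_of_mem (Finset.mem_image_of_mem _ hxt), ?_⟩
      have hx' : 1 / 2 < ‖f‖⁻¹ * ‖f x‖ := by simpa [norm_smul] using hx
      rw [inv_mul_eq_div, lt_div_iff₀ hpos] at hx'
      linarith

/-- The dual of an infinite-dimensional space contains a normalized sequence whose initial
projections are bounded by `2`. -/
theorem exists_basic_sequence_dual (hX : ¬ FiniteDimensional 𝕜 X) :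
    ∃ z : ℕ → StrongDual 𝕜 X, (∀ n, ‖z n‖ = 1) ∧
      ∀ N, ∀ d ∈ Submodule.span 𝕜 (z '' Iio N), ∀ e ∈ Submodule.span 𝕜 (z '' Ici N),
        ‖d‖ ≤ 2 * ‖d - e‖ := by
  classical
  choose Φ hΦ1 hΦ using fun s => exists_finset_norming (𝕜 := 𝕜) (X := X) s
  choose Z hZ1 hZ using fun s => exists_norm_one_dual_vanishing hX s
  let next : Finset (StrongDual 𝕜 X) → StrongDual 𝕜 X := fun s => Z (s.powerset.biUnion Φ)
  let S : ℕ → Finset (StrongDual 𝕜 X) := fun n => (fun s => insert (next s) s)^[n] ∅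
  have hS : ∀ n, S (n + 1) = insert (next (S n)) (S n) :=
    fun n => Function.iterate_succ_apply' _ _ _
  have hmono : Monotone S := monotone_nat_of_le_succ fun n => by
    rw [hS]; exact Finset.subset_insert _ _
  refine ⟨fun n => next (S n), fun n => hZ1 _, fun N d hd e he => ?_⟩
  have hd' : d ∈ Submodule.span 𝕜 (S N : Set (StrongDual 𝕜 X)) := by
    refine Submodule.span_mono ?_ hd
    rintro _ ⟨n, hn, rfl⟩
    have : next (S n) ∈ S (n + 1) := by rw [hS]; exact Finset.mem_insert_self _ _
    exact hmono (Nat.succ_le_of_lt hn) this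
  obtain ⟨x, hx, hdx⟩ := hΦ _ d hd'
  have hex : e x = 0 := by
    induction he using Submodule.span_induction with
    | mem f hf =>
      obtain ⟨n, hn, rfl⟩ := hf
      exact hZ _ x (Finset.mem_biUnion.2 ⟨S N, Finset.mem_powerset.2 (hmono hn), hx⟩)
    | zero => simp
    | add f g _ _ hf hg => simp [hf, hg]
    | smul c f _ hf => simp [hf]
  calc ‖d‖ ≤ 2 * ‖(d - e) x‖ := by simpa [hex] using hdx
    _ ≤ 2 * ‖d - e‖ := by
      gcongr
      exact (d - e).unit_le_opNorm x (hΦ1 _ x hx)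


/-- If the convex tails of a sequence in the dual ball oscillate uniformly at points of the
unit ball, then Rademacher-type averages of the sequence produce a weak* null sequence
that is bounded away from zero in norm. -/
theorem exists_weakStar_null_of_oscillation {h : ℕ → StrongDual 𝕜 X} (hb : ∀ k, ‖h k‖ ≤ 1)
    {ε : ℝ} (hε : 0 < ε)
    (hosc : ∀ H : ℕ → StrongDual 𝕜 X, IsConvexTail H h →
      ∃ x : X, ‖x‖ ≤ 1 ∧ ∀ K, ∃ p ≥ K, ∃ q ≥ K, ε ≤ RCLike.re (H p x - H q x)) :
    ∃ f : ℕ → StrongDual 𝕜 X, (∀ x, Tendsto (fun n => f n x) atTop (𝓝 0)) ∧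
      ∃ c > 0, ∀ n, c ≤ ‖f n‖ := by
  have hstep : ∀ H : {H : ℕ → StrongDual 𝕜 X // IsConvexTail H h},
      ∃ x : X, ∃ p q : ℕ → ℕ, ‖x‖ ≤ 1 ∧ (∀ k, k ≤ p k) ∧ (∀ k, k ≤ q k) ∧
        ∀ k, ε ≤ RCLike.re (H.1 (p k) x - H.1 (q k) x) := by
    intro H
    obtain ⟨x, hx, hK⟩ := hosc H.1 H.2
    choose p hp q hq hpq using hK
    exact ⟨x, p, q, hx, hp, hq, hpq⟩
  choose pt P Q hpt hP hQ hPQ using hstep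
  let next : {H : ℕ → StrongDual 𝕜 X // IsConvexTail H h} →
      {H : ℕ → StrongDual 𝕜 X // IsConvexTail H h} := fun H =>
    ⟨_, (IsConvexTail.midpoint H.1 (hP H) (hQ H)).trans H.2⟩
  let H : ℕ → {H : ℕ → StrongDual 𝕜 X // IsConvexTail H h} :=
    fun m => next^[m] ⟨h, IsConvexTail.refl h⟩
  have hH : ∀ m k, (H (m + 1)).1 k = (1 / 2 : ℝ) • (H m).1 (P (H m) k) +
      (1 / 2 : ℝ) • (H m).1 (Q (H m) k) := fun m k => by
    simp only [H, Function.iterate_succ_apply', next]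
  let D : ℕ → ℕ → ℕ → StrongDual 𝕜 X := fun j m => Nat.rec (fun _ => 0)
    (fun m d k => if j = m then
        (1 / 2 : ℝ) • (H m).1 (P (H m) k) - (1 / 2 : ℝ) • (H m).1 (Q (H m) k)
      else (1 / 2 : ℝ) • d (P (H m) k) + (1 / 2 : ℝ) • d (Q (H m) k)) m
  have hD_self : ∀ m k, D m (m + 1) k =
      (1 / 2 : ℝ) • (H m).1 (P (H m) k) - (1 / 2 : ℝ) • (H m).1 (Q (H m) k) :=
    fun m k => if_pos rfl
  have hD_succ : ∀ j m k, j ≠ m → D j (m + 1) k =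
      (1 / 2 : ℝ) • D j m (P (H m) k) + (1 / 2 : ℝ) • D j m (Q (H m) k) :=
    fun j m k hjm => if_neg hjm
  -- Bessel's inequality for the averages
  have hbessel : ∀ m k x, ‖(H m).1 k x‖ ^ 2 + ∑ j ∈ Finset.range m, ‖D j m k x‖ ^ 2
      ≤ ‖x‖ ^ 2 := by
    intro m
    induction m with
    | zero =>
      intro k x
      have : ‖h k x‖ ≤ ‖x‖ := by simpa using (h k).le_of_opNorm_le (hb k) x
      simpa [H] using pow_le_pow_left₀ (norm_nonneg _) this 2
    | succ m ih =>
      intro k x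
      have hsum : ∑ j ∈ Finset.range m, ‖D j (m + 1) k x‖ ^ 2 ≤
          ∑ j ∈ Finset.range m, ((1 / 2) * ‖D j m (P (H m) k) x‖ ^ 2 +
            (1 / 2) * ‖D j m (Q (H m) k) x‖ ^ 2) := by
        refine Finset.sum_le_sum fun j hj => ?_
        rw [hD_succ j m k (Finset.mem_range.1 hj).ne]
        set a := D j m (P (H m) k) x
        set b := D j m (Q (H m) k) x
        have hab : ‖(1 / 2 : ℝ) • a + (1 / 2 : ℝ) • b‖ ≤ (1 / 2) * ‖a‖ + (1 / 2) * ‖b‖ := by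
          refine (norm_add_le _ _).trans (le_of_eq ?_)
          simp [norm_smul]
        calc ‖(1 / 2 : ℝ) • a + (1 / 2 : ℝ) • b‖ ^ 2
            ≤ ((1 / 2) * ‖a‖ + (1 / 2) * ‖b‖) ^ 2 := by gcongr
          _ ≤ _ := by nlinarith [sq_nonneg (‖a‖ - ‖b‖)]
      rw [Finset.sum_add_distrib, ← Finset.mul_sum, ← Finset.mul_sum] at hsum
      have hpar : ‖(H (m + 1)).1 k x‖ ^ 2 + ‖D m (m + 1) k x‖ ^ 2 =
          (1 / 2) * ‖(H m).1 (P (H m) k) x‖ ^ 2 + (1 / 2) * ‖(H m).1 (Q (H m) k) x‖ ^ 2 := by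
        rw [hH, hD_self]
        set a := (H m).1 (P (H m) k) x
        set b := (H m).1 (Q (H m) k) x
        have := parallelogram_law_with_norm 𝕜 ((1 / 2 : ℝ) • a) ((1 / 2 : ℝ) • b)
        simp only [norm_smul] at this
        norm_num [mul_pow] at this
        change ‖(1 / 2 : ℝ) • a + (1 / 2 : ℝ) • b‖ ^ 2 + ‖(1 / 2 : ℝ) • a - (1 / 2 : ℝ) • b‖ ^ 2 = _
        norm_num
        linarith
      rw [Finset.sum_range_succ]
      linarith [ih (P (H m) k) x, ih (Q (H m) k) x]
  have hlower : ∀ j m, j < m → ∀ k, ε / 2 ≤ RCLike.re (D j m k (pt (H j))) := by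
    intro j m hjm
    induction m, hjm using Nat.le_induction with
    | base =>
      intro k
      have := hPQ (H j) k
      rw [hD_self]
      simp [RCLike.smul_re] at this ⊢
      linarith
    | succ m hjm ih =>
      intro k
      rw [hD_succ j m k (Nat.lt_of_succ_le hjm).ne]
      have h1 := ih (P (H m) k)
      have h2 := ih (Q (H m) k)
      simp [RCLike.smul_re]
      linarith
  have hnorm : ∀ j m, j < m → ‖D j m 0‖ ≤ 1 := by
    intro j m hjm
    refine ContinuousLinearMap.opNorm_le_bound _ zero_le_one fun x => ?_
    rw [one_mul]
    refine le_of_sq_le_sq ?_ (norm_nonneg x)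
    have h1 := Finset.single_le_sum (f := fun j => ‖D j m 0 x‖ ^ 2)
      (fun i _ => sq_nonneg _) (Finset.mem_range.2 hjm)
    nlinarith [hbessel m 0 x, sq_nonneg ‖(H m).1 0 x‖]
  -- weak* limits of the averages along an ultrafilter
  have hlim : ∀ j, ∃ f : StrongDual 𝕜 X,
      ∀ x, Tendsto (fun m => D j m 0 x) (hyperfilter ℕ : Filter ℕ) (𝓝 (f x)) := by
    intro j
    obtain ⟨f, -, hf⟩ := (WeakDual.isCompact_closedBall (𝕜 := 𝕜) (0 : StrongDual 𝕜 X) 1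
      ).ultrafilter_le_nhds ((hyperfilter ℕ).map fun m => StrongDual.toWeakDual (D j m 0)) (by
        rw [Ultrafilter.coe_map, le_principal_iff, mem_map]
        have : ∀ᶠ m in (hyperfilter ℕ : Filter ℕ), j < m :=
          (eventually_gt_atTop j).filter_mono Nat.hyperfilter_le_atTop
        filter_upwards [this] with m hm
        simpa using hnorm j m hm)
    exact ⟨WeakDual.toStrongDual f, fun x => ((WeakDual.eval_continuous x).tendsto f).comp hf⟩
  choose f hf using hlim
  refine ⟨f, fun x => ?_, ε / 2, half_pos hε, fun j => ?_⟩
  · have hsum : Summable fun j => ‖f j x‖ ^ 2 := by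
      refine summable_of_sum_range_le (c := ‖x‖ ^ 2) (fun _ => sq_nonneg _) fun N => ?_
      refine le_of_tendsto (tendsto_finsetSum (Finset.range N)
        fun j _ => ((hf j x).norm.pow 2)) ?_
      filter_upwards [(eventually_ge_atTop N).filter_mono Nat.hyperfilter_le_atTop] with m hm
      have := Finset.sum_le_sum_of_subset_of_nonneg (f := fun j => ‖D j m 0 x‖ ^ 2)
        (Finset.range_mono hm) (fun i _ _ => sq_nonneg _)
      nlinarith [hbessel m 0 x, sq_nonneg ‖(H m).1 0 x‖]
    have := hsum.tendsto_atTop_zero.sqrt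
    simp only [Real.sqrt_sq (norm_nonneg _), Real.sqrt_zero] at this
    exact tendsto_zero_iff_norm_tendsto_zero.2 this
  · have h1 : ε / 2 ≤ RCLike.re (f j (pt (H j))) := by
      refine ge_of_tendsto ((RCLike.continuous_re.tendsto _).comp (hf j (pt (H j)))) ?_
      filter_upwards [(eventually_gt_atTop j).filter_mono Nat.hyperfilter_le_atTop] with m hm
      exact hlower j m hm 0
    exact h1.trans ((RCLike.re_le_norm _).trans ((f j).unit_le_opNorm _ (hpt _)))

theorem norm_le_abs_re_add_abs_im (z : 𝕜) : ‖z‖ ≤ |RCLike.re z| + |RCLike.im z| := by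
  refine abs_le_of_sq_le_sq' ?_ (by positivity) |>.2
  rw [← RCLike.normSq_eq_def', RCLike.normSq_apply]
  nlinarith [abs_mul_abs_self (RCLike.re z), abs_mul_abs_self (RCLike.im z),
    mul_nonneg (abs_nonneg (RCLike.re z)) (abs_nonneg (RCLike.im z))]

/-- A sequence of functionals in which oscillation can be made arbitrarily small by passing to
convex tails, hereditarily, has a convex tail that is pointwise Cauchy. -/
theorem exists_convexTail_cauchy {g : ℕ → StrongDual 𝕜 X}
    (hg : ∀ h : ℕ → StrongDual 𝕜 X, IsConvexTail h g → ∀ ε > 0,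
      ∃ H : ℕ → StrongDual 𝕜 X, IsConvexTail H h ∧
        ∀ x : X, ‖x‖ ≤ 1 → ∃ K, ∀ p ≥ K, ∀ q ≥ K, RCLike.re (H p x - H q x) < ε) :
    ∃ d : ℕ → StrongDual 𝕜 X, IsConvexTail d g ∧ ∀ x, CauchySeq fun n => d n x := by
  choose! F hF hFosc using hg
  let G : ℕ → ℕ → StrongDual 𝕜 X := fun j => Nat.rec g (fun j h => F h (1 / ((j : ℝ) + 1))) j
  have hGg : ∀ j, IsConvexTail (G j) g := by
    intro j
    induction j with
    | zero => exact IsConvexTail.refl g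
    | succ j ih => exact (hF (G j) ih _ Nat.one_div_pos_of_nat).trans ih
  have hG : ∀ j, IsConvexTail (G (j + 1)) (G j) :=
    fun j => hF (G j) (hGg j) _ Nat.one_div_pos_of_nat
  have hdiag := fun j k => diagonal_mem_convexHull hG (j := j) (k := k)
  refine ⟨fun k => G k k, fun k => hdiag 0 k (Nat.zero_le k), ?_⟩
  have hre : ∀ x : X, ‖x‖ ≤ 1 → ∀ ε > 0, ∃ K, ∀ p ≥ K, ∀ q ≥ K,
      RCLike.re (G p p x - G q q x) < ε := by
    intro x hx ε hε
    obtain ⟨j, hj⟩ := exists_nat_one_div_lt hε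
    obtain ⟨K, hK⟩ := hFosc (G j) (hGg j) _ Nat.one_div_pos_of_nat x hx
    have hlin : IsLinearMap ℝ fun f : StrongDual 𝕜 X => RCLike.re (f x) :=
      ⟨fun f g => by simp, fun c f => by simp [RCLike.smul_re]⟩
    refine ⟨max K (j + 1), fun p hp q hq => lt_trans ?_ hj⟩
    have hmem : ∀ n ≥ max K (j + 1), ∀ C : Set (StrongDual 𝕜 X), Convex ℝ C →
        (∀ i ≥ K, G (j + 1) i ∈ C) → G n n ∈ C := by
      intro n hn C hC hi
      refine convexHull_min ?_ hC (hdiag (j + 1) n (le_trans (le_max_right _ _) hn))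
      rintro _ ⟨i, hin, rfl⟩
      exact hi i (le_trans (le_trans (le_max_left _ _) hn) hin)
    have h1 : ∀ i ≥ K, RCLike.re (G p p x) < 1 / ((j : ℝ) + 1) + RCLike.re (G (j + 1) i x) := by
      intro i hi
      refine hmem p hp _ (convex_halfSpace_lt hlin _) fun n hn => ?_
      have := hK n hn i hi
      rw [map_sub] at this
      exact sub_lt_iff_lt_add.1 this
    have h2 : RCLike.re (G p p x) - 1 / ((j : ℝ) + 1) < RCLike.re (G q q x) :=
      hmem q hq _ (convex_halfSpace_gt hlin _) fun n hn => by
        have := h1 n hn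
        rw [mem_ofPred_eq]
        linarith
    rw [map_sub]
    linarith
  have hball : ∀ x : X, ‖x‖ ≤ 1 → CauchySeq fun n => G n n x := by
    intro x hx
    refine Metric.cauchySeq_iff.2 fun ε hε => ?_
    obtain ⟨K₁, hK₁⟩ := hre x hx (ε / 2) (half_pos hε)
    obtain ⟨K₂, hK₂⟩ := hre ((RCLike.I : 𝕜) • x) (by
      rw [norm_smul]
      refine mul_le_one₀ ?_ (norm_nonneg _) hx
      by_cases hI : (RCLike.I : 𝕜) = 0
      · simp [hI]
      · exact (RCLike.norm_I_of_ne_zero hI).le) (ε / 2) (half_pos hε)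
    refine ⟨max K₁ K₂, fun p hp q hq => ?_⟩
    have a1 := hK₁ p (le_trans (le_max_left _ _) hp) q (le_trans (le_max_left _ _) hq)
    have a2 := hK₁ q (le_trans (le_max_left _ _) hq) p (le_trans (le_max_left _ _) hp)
    have b1 := hK₂ p (le_trans (le_max_right _ _) hp) q (le_trans (le_max_right _ _) hq)
    have b2 := hK₂ q (le_trans (le_max_right _ _) hq) p (le_trans (le_max_right _ _) hp)
    rw [dist_eq_norm]
    have c1 : |RCLike.re (G p p x - G q q x)| < ε / 2 := by
      rw [abs_lt]
      rw [map_sub] at a1 a2 ⊢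
      constructor <;> linarith
    have c2 : |RCLike.im (G p p x - G q q x)| < ε / 2 := by
      simp only [map_smul, smul_eq_mul, map_sub, RCLike.I_mul_re] at b1 b2
      rw [abs_lt, map_sub]
      constructor <;> linarith
    exact (norm_le_abs_re_add_abs_im _).trans_lt (by linarith)
  intro x
  by_cases hx : x = 0
  · simpa [hx] using cauchySeq_const (0 : 𝕜)
  · have hnx : (‖x‖ : 𝕜) ≠ 0 := by simpa using hx
    obtain ⟨l, hl⟩ := cauchySeq_tendsto_of_complete
      (hball ((‖x‖ : 𝕜)⁻¹ • x) (norm_smul_inv_norm hx).le)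
    have := (hl.const_mul (‖x‖ : 𝕜)).cauchySeq
    simpa only [map_smul, smul_eq_mul, mul_inv_cancel_left₀ hnx] using this

/-- The **Josefson–Nissenzweig theorem**. -/
theorem exists_weakStar_null_norm_ge (hX : ¬ FiniteDimensional 𝕜 X) :
    ∃ f : ℕ → StrongDual 𝕜 X, (∀ x, Tendsto (fun n => f n x) atTop (𝓝 0)) ∧
      ∃ c > 0, ∀ n, c ≤ ‖f n‖ := by
  obtain ⟨z, hz1, hz⟩ := exists_basic_sequence_dual hX
  by_cases hnull : ∀ x, Tendsto (fun n => z n x) atTop (𝓝 0)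
  · exact ⟨z, hnull, 1, one_pos, fun n => (hz1 n).ge⟩
  obtain ⟨x₀, δ, hδ, φ, hφ, hφδ⟩ : ∃ x₀ : X, ∃ δ > 0, ∃ φ : ℕ → ℕ, (∀ k, k ≤ φ k) ∧
      ∀ k, δ ≤ RCLike.re (z (φ k) x₀) := by
    by_contra! hneg
    refine hnull fun x => Metric.tendsto_atTop.2 fun ε hε => ?_
    have hre : ∀ y : X, ∃ K, ∀ n ≥ K, RCLike.re (z n y) < ε / 2 := by
      intro y
      by_contra! hK
      choose φ hφ hφε using hK
      obtain ⟨k, hk⟩ := hneg y (ε / 2) (half_pos hε) φ hφ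
      exact hk.not_ge (hφε k)
    obtain ⟨K₁, h₁⟩ := hre x
    obtain ⟨K₂, h₂⟩ := hre (-x)
    obtain ⟨K₃, h₃⟩ := hre ((RCLike.I : 𝕜) • x)
    obtain ⟨K₄, h₄⟩ := hre (-((RCLike.I : 𝕜) • x))
    refine ⟨max (max K₁ K₂) (max K₃ K₄), fun n hn => ?_⟩
    simp only [ge_iff_le, max_le_iff] at hn
    have a₁ := h₁ n hn.1.1
    have a₂ := h₂ n hn.1.2
    have a₃ := h₃ n hn.2.1
    have a₄ := h₄ n hn.2.2
    simp only [map_neg, map_smul, smul_eq_mul, RCLike.I_mul_re] at a₂ a₃ a₄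
    have hR : |RCLike.re (z n x)| < ε / 2 := abs_lt.2 ⟨by linarith, by linarith⟩
    have hI : |RCLike.im (z n x)| < ε / 2 := abs_lt.2 ⟨by linarith, by linarith⟩
    rw [dist_zero_right]
    exact (norm_le_abs_re_add_abs_im _).trans_lt (by linarith)
  have hgz : IsConvexTail (z ∘ φ) z := IsConvexTail.comp z hφ
  by_cases hosc : ∃ h : ℕ → StrongDual 𝕜 X, IsConvexTail h (z ∘ φ) ∧ ∃ ε > 0,
      ∀ H : ℕ → StrongDual 𝕜 X, IsConvexTail H h →
        ∃ x : X, ‖x‖ ≤ 1 ∧ ∀ K, ∃ p ≥ K, ∃ q ≥ K, ε ≤ RCLike.re (H p x - H q x)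
  · obtain ⟨h, hh, ε, hε, H⟩ := hosc
    refine exists_weakStar_null_of_oscillation (fun k => ?_) hε H
    have := (hh.trans hgz).mem_of_convex (convex_closedBall (0 : StrongDual 𝕜 X) 1) (K := 0)
      (fun n _ => mem_closedBall_zero_iff.2 (hz1 n).le) (Nat.zero_le k)
    exact mem_closedBall_zero_iff.1 this
  push Not at hosc
  obtain ⟨d, hd, hcauchy⟩ := exists_convexTail_cauchy hosc
  have hspan : ∀ s : Set (StrongDual 𝕜 X),
      convexHull ℝ s ⊆ (Submodule.span 𝕜 s : Set (StrongDual 𝕜 X)) := fun s =>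
    convexHull_min Submodule.subset_span ((Submodule.span 𝕜 s).restrictScalars ℝ).convex
  have hlower : ∀ k, δ ≤ ‖d k‖ * ‖x₀‖ := by
    intro k
    have hlin : IsLinearMap ℝ fun f : StrongDual 𝕜 X => RCLike.re (f x₀) :=
      ⟨fun f g => by simp, fun c f => by simp [RCLike.smul_re]⟩
    have : δ ≤ RCLike.re (d k x₀) := hd.mem_of_convex (convex_halfSpace_ge hlin δ) (K := 0)
      (fun n _ => hφδ n) (Nat.zero_le k)
    exact this.trans ((RCLike.re_le_norm _).trans ((d k).le_opNorm x₀))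
  have hfar : ∀ k, ∃ p ≥ k, ‖d k‖ ≤ 2 * ‖d k - d p‖ := by
    intro k
    have hk : d k ∈ Submodule.span 𝕜 (⋃ N, z '' Iio N) := by
      refine Submodule.span_mono ?_ (hspan _ ((hd.trans hgz) k))
      rintro _ ⟨n, -, rfl⟩
      exact mem_iUnion.2 ⟨n + 1, n, Nat.lt_succ_self n, rfl⟩
    have hdir : Directed (· ≤ ·) fun N => Submodule.span 𝕜 (z '' Iio N) :=
      Monotone.directed_le fun a b hab =>
        Submodule.span_mono (image_mono (Iio_subset_Iio hab))
    rw [Submodule.span_iUnion, Submodule.mem_iSup_of_directed _ hdir] at hk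
    obtain ⟨N, hN⟩ := hk
    refine ⟨max k N, le_max_left _ _, hz N _ hN _ ?_⟩
    exact Submodule.span_mono (image_mono (Ici_subset_Ici.2 (le_max_right _ _)))
      (hspan _ ((hd.trans hgz) _))
  choose p hp hfar using hfar
  have hx₀ : 0 < ‖x₀‖ := by
    by_contra! hle
    have := hlower 0
    nlinarith [norm_nonneg (d 0), norm_nonneg x₀]
  refine ⟨fun k => d k - d (p k), fun x => ?_, δ / ‖x₀‖ / 2, by positivity, fun k => ?_⟩
  · obtain ⟨l, hl⟩ := cauchySeq_tendsto_of_complete (hcauchy x)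
    simpa using hl.sub (hl.comp (tendsto_atTop_mono hp tendsto_id))
  · have := (div_le_iff₀ hx₀).2 (hlower k)
    linarith [hfar k]

theorem exists_weakStar_null_norm_one (hX : ¬ FiniteDimensional 𝕜 X) :
    ∃ f : ℕ → StrongDual 𝕜 X, (∀ x, Tendsto (fun n => f n x) atTop (𝓝 0)) ∧ ∀ n, ‖f n‖ = 1 := by
  obtain ⟨f, hf, c, hc, hfc⟩ := exists_weakStar_null_norm_ge hX
  refine ⟨fun n => (‖f n‖ : 𝕜)⁻¹ • f n, fun x => ?_, fun n =>
    norm_smul_inv_norm (norm_pos_iff.1 (hc.trans_le (hfc n)))⟩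
  refine squeeze_zero_norm (a := fun n => c⁻¹ * ‖f n x‖) (fun n => ?_) ?_
  · have : ‖f n‖⁻¹ ≤ c⁻¹ := inv_anti₀ hc (hfc n)
    simpa [norm_smul] using mul_le_mul_of_nonneg_right this (norm_nonneg (f n x))
  · simpa using (hf x).norm.const_mul c⁻¹

end Dual

open ZeroAtInfty

/-- for every infinite-dimensional Banach space `X` there exists a bounded linear
operator `T : X → c₀` which does not quasi attain its norm. -/
theorem exists_operator_to_c0_not_quasi_attaining {𝕜 X : Type*} [RCLike 𝕜]
    [NormedAddCommGroup X] [NormedSpace 𝕜 X] [CompleteSpace X]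
    (hX : ¬ FiniteDimensional 𝕜 X) :
    ∃ T : X →L[𝕜] C₀(ℕ, 𝕜), ¬ ∃ u ∈ closure (⇑T '' Metric.closedBall 0 1), ‖u‖ = ‖T‖ := by
  obtain ⟨f, hf, hf1⟩ := exists_weakStar_null_norm_one hX
  let w : ℕ → ℝ := fun n => 1 - 1 / ((n : ℝ) + 2)
  have hw0 : ∀ n, 0 ≤ w n := fun n => by
    simp only [w, sub_nonneg]
    rw [div_le_one (by positivity)]
    linarith [(n.cast_nonneg : (0 : ℝ) ≤ n)]
  have hw1 : ∀ n, w n < 1 := fun n => by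
    have : (0 : ℝ) < 1 / ((n : ℝ) + 2) := by positivity
    simp only [w]
    linarith
  have hwmono : Monotone w := fun a b hab => by
    simp only [w]
    gcongr
  have norm_coord_le : ∀ (u : C₀(ℕ, 𝕜)) n, ‖u n‖ ≤ ‖u‖ := fun u n => u.toBCF.norm_coe_le_norm n
  have norm_le_of_coord : ∀ (u : C₀(ℕ, 𝕜)) (C : ℝ), 0 ≤ C → (∀ n, ‖u n‖ ≤ C) → ‖u‖ ≤ C :=
    fun u C hC hu => (BoundedContinuousFunction.norm_le (f := u.toBCF) hC).2 hu
  have hTnull : ∀ x, Tendsto (fun n => (w n : 𝕜) * f n x) (cocompact ℕ) (𝓝 0) := by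
    intro x
    rw [cocompact_eq_atTop]
    refine squeeze_zero_norm (fun n => ?_) (by simpa using (hf x).norm)
    rw [norm_mul, RCLike.norm_of_nonneg (hw0 n)]
    exact mul_le_of_le_one_left (norm_nonneg _) (hw1 n).le
  let L : X →ₗ[𝕜] C₀(ℕ, 𝕜) :=
    { toFun := fun x => ⟨⟨fun n => (w n : 𝕜) * f n x, continuous_of_discreteTopology⟩, hTnull x⟩
      map_add' := fun x y => by ext n; simp [mul_add]
      map_smul' := fun c x => by ext n; simp [mul_left_comm] }
  have hLcoord : ∀ x n, ‖L x n‖ ≤ w n * ‖x‖ := fun x n => by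
    change ‖(w n : 𝕜) * f n x‖ ≤ _
    rw [norm_mul, RCLike.norm_of_nonneg (hw0 n)]
    have := (f n).le_opNorm x
    rw [hf1, one_mul] at this
    exact mul_le_mul_of_nonneg_left this (hw0 n)
  have hL : ∀ x, ‖L x‖ ≤ 1 * ‖x‖ := fun x =>
    norm_le_of_coord _ _ (by positivity) fun n => (hLcoord x n).trans
      (mul_le_mul_of_nonneg_right (hw1 n).le (norm_nonneg x))
  let T : X →L[𝕜] C₀(ℕ, 𝕜) := L.mkContinuous 1 hL
  have hTw : ∀ n, w n ≤ ‖T‖ := by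
    intro n
    have hn : ‖(w n : 𝕜) • f n‖ ≤ ‖T‖ :=
      ContinuousLinearMap.opNorm_le_bound _ T.opNorm_nonneg fun x =>
        (norm_coord_le (T x) n).trans (T.le_opNorm x)
    rwa [norm_smul, hf1, mul_one, RCLike.norm_of_nonneg (hw0 n)] at hn
  have hT : 1 ≤ ‖T‖ := by
    have hlim : Tendsto w atTop (𝓝 1) := by
      have h := ((tendsto_add_atTop_iff_nat 1).2
        (tendsto_one_div_add_atTop_nhds_zero_nat (𝕜 := ℝ))).const_sub 1
      rw [sub_zero] at h
      refine h.congr fun n => ?_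
      simp only [w]
      push_cast
      ring_nf
    exact le_of_tendsto' hlim hTw
  refine ⟨T, ?_⟩
  rintro ⟨u, hu, hnorm⟩
  have hcoord : ∀ n, ‖u n‖ ≤ w n := by
    intro n
    have hclosed : IsClosed {v : C₀(ℕ, 𝕜) | ‖v n‖ ≤ w n} := by
      have hlip : LipschitzWith 1 fun v : C₀(ℕ, 𝕜) => v n := LipschitzWith.of_dist_le_mul
        fun a b => by simpa [dist_eq_norm] using norm_coord_le (a - b) n
      exact isClosed_le hlip.continuous.norm continuous_const
    refine closure_minimal ?_ hclosed hu
    rintro _ ⟨x, hx, rfl⟩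
    exact (hLcoord x n).trans (mul_le_of_le_one_right (hw0 n) (mem_closedBall_zero_iff.1 hx))
  have hnull : Tendsto (fun n => ‖u n‖) atTop (𝓝 0) := by
    have := (zero_at_infty u).norm
    rwa [cocompact_eq_atTop, norm_zero] at this
  obtain ⟨N, hN⟩ := eventually_atTop.1 (hnull.eventually_le_const (u := 1 / 2) (by norm_num))
  have hle : ‖u‖ ≤ w N := by
    refine norm_le_of_coord _ _ (hw0 N) fun n => ?_
    rcases le_total n N with h | h
    · exact (hcoord n).trans (hwmono h)
    · refine (hN n h).trans (le_trans ?_ (hwmono (Nat.zero_le N)))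
      norm_num [w]
  linarith [hw1 N]
end
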